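/- arXiv:2402.14319 — 2 statements merged into one kernel-verified Lean document; each statement's English description precedes it below -/
import Mathlib

section
/- Let n ≥ 1 and p = 1 + 2/n. There exists ε > 0 with the following property: if φ is a measurable function on ℝ^n such that for some K ≥ 0 one has |φ(x)| ≤ ε |x|^{−n} [log(e + 1/|x|)]^{−n/2−1} + K for a.e. x ∈ ℝ^n, then there exists T > 0 and a solution u of the semilinear heat equation ∂_t u − Δu = |u|^{p−1}u on ℝ^n × (0,T) with initial data φ (in the Duhamel integral sense). -/
open MeasureTheory Real Set ENNReal

noncomputable def logFac (s : ℝ) : ℝ := Real.log (Real.exp 1 + 1 / s)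

noncomputable def zygNorm (n : ℕ) (q α : ℝ)
    (f : EuclideanSpace ℝ (Fin n) → ℝ) : ℝ≥0∞ :=
  ⨆ s : Set.Ioi (0 : ℝ),
    (ENNReal.ofReal (logFac s.1) ^ α *
      ⨆ E : {E : Set (EuclideanSpace ℝ (Fin n)) //
          MeasurableSet E ∧ volume E = ENNReal.ofReal s.1},
        ∫⁻ x in E.1, ENNReal.ofReal (|f x| ^ q)) ^ (1 / q)

noncomputable def zygNormUL (n : ℕ) (q α ρ : ℝ)
    (f : EuclideanSpace ℝ (Fin n) → ℝ) : ℝ≥0∞ :=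
  ⨆ z : EuclideanSpace ℝ (Fin n),
    zygNorm n q α ((Metric.ball z ρ).indicator f)

noncomputable def heatKernel (n : ℕ) (x : EuclideanSpace ℝ (Fin n)) (t : ℝ) : ℝ :=
  (4 * Real.pi * t) ^ (-(n : ℝ) / 2) * Real.exp (-‖x‖ ^ 2 / (4 * t))

/-- `u` is a solution of `∂ₜu − Δu = |u|^{p−1}u` on `ℝ^n × (0,T)` with initial data `φ`,
in the Duhamel integral sense. -/
def IsSolution (n : ℕ) (p T : ℝ) (φ : EuclideanSpace ℝ (Fin n) → ℝ)
    (u : EuclideanSpace ℝ (Fin n) → ℝ → ℝ) : Prop :=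
  Measurable (fun q : EuclideanSpace ℝ (Fin n) × ℝ => u q.1 q.2) ∧
  ∀ᵐ q : EuclideanSpace ℝ (Fin n) × ℝ
      ∂(volume.prod (volume.restrict (Set.Ioo 0 T))),
    Integrable (fun y => heatKernel n (q.1 - y) q.2 * φ y) volume ∧
    Integrable (fun ys : EuclideanSpace ℝ (Fin n) × ℝ =>
        heatKernel n (q.1 - ys.1) (q.2 - ys.2) * (|u ys.1 ys.2| ^ (p - 1) * u ys.1 ys.2))
      (volume.prod (volume.restrict (Set.Ioo 0 q.2))) ∧
    u q.1 q.2 = (∫ y, heatKernel n (q.1 - y) q.2 * φ y) +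
      ∫ s in Set.Ioo 0 q.2, ∫ y,
        heatKernel n (q.1 - y) (q.2 - s) * (|u y s| ^ (p - 1) * u y s)


noncomputable def heatK (n : ℕ) (x : EuclideanSpace ℝ (Fin n)) (t : ℝ) : ℝ≥0∞ :=
  ENNReal.ofReal (heatKernel n x t)

noncomputable def heatS (n : ℕ) (t : ℝ) (g : EuclideanSpace ℝ (Fin n) → ℝ≥0∞)
    (x : EuclideanSpace ℝ (Fin n)) : ℝ≥0∞ := ∫⁻ y, heatK n (x - y) t * g y

lemma heatKernel_nonneg (n : ℕ) (x : EuclideanSpace ℝ (Fin n)) {t : ℝ} (ht : 0 < t) :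
    0 ≤ heatKernel n x t := by unfold heatKernel; positivity

lemma measurable_heatKernel (n : ℕ) :
    Measurable (fun q : EuclideanSpace ℝ (Fin n) × ℝ => heatKernel n q.1 q.2) := by
  unfold heatKernel
  fun_prop

lemma measurable_heatK (n : ℕ) :
    Measurable (fun q : EuclideanSpace ℝ (Fin n) × ℝ => heatK n q.1 q.2) :=
  (measurable_heatKernel n).ennreal_ofReal

lemma measurable_heatK' (n : ℕ) {α : Type*} [MeasurableSpace α]
    {f : α → EuclideanSpace ℝ (Fin n)} {g : α → ℝ} (hf : Measurable f) (hg : Measurable g) :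
    Measurable (fun a => heatK n (f a) (g a)) :=
  (measurable_heatK n).comp (hf.prodMk hg)

lemma measurable_heatKernel' (n : ℕ) {α : Type*} [MeasurableSpace α]
    {f : α → EuclideanSpace ℝ (Fin n)} {g : α → ℝ} (hf : Measurable f) (hg : Measurable g) :
    Measurable (fun a => heatKernel n (f a) (g a)) :=
  (measurable_heatKernel n).comp (hf.prodMk hg)

lemma heatK_le (n : ℕ) (x : EuclideanSpace ℝ (Fin n)) {t : ℝ} (ht : 0 < t) :
    heatK n x t ≤ ENNReal.ofReal (t ^ (-(n : ℝ) / 2)) := by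
  unfold heatK heatKernel
  apply ENNReal.ofReal_le_ofReal
  have h1 : Real.exp (-‖x‖ ^ 2 / (4 * t)) ≤ 1 := by
    rw [Real.exp_le_one_iff]
    apply div_nonpos_of_nonpos_of_nonneg <;> nlinarith [sq_nonneg ‖x‖]
  have h2 : (4 * Real.pi * t) ^ (-(n : ℝ) / 2) ≤ t ^ (-(n : ℝ) / 2) := by
    apply Real.rpow_le_rpow_of_nonpos ht
    · nlinarith [Real.pi_gt_three]
    · have : (0:ℝ) ≤ n := by positivity
      linarith
  calc _ ≤ (4 * Real.pi * t) ^ (-(n : ℝ) / 2) * 1 := by gcongr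
    _ ≤ _ := by simpa using h2

lemma gauss_lint (n : ℕ) {b : ℝ} (hb : 0 < b) (c : EuclideanSpace ℝ (Fin n)) :
    ∫⁻ y : EuclideanSpace ℝ (Fin n), ENNReal.ofReal (Real.exp (-b * ‖y - c‖ ^ 2)) =
      ENNReal.ofReal ((Real.pi / b) ^ ((n : ℝ) / 2)) := by
  rw [lintegral_sub_right_eq_self (fun y : EuclideanSpace ℝ (Fin n) =>
    ENNReal.ofReal (Real.exp (-b * ‖y‖ ^ 2))) c]
  have hint : Integrable (fun y : EuclideanSpace ℝ (Fin n) => Real.exp (-b * ‖y‖ ^ 2)) := by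
    have := GaussianFourier.integrable_cexp_neg_mul_sq_norm_add (V := EuclideanSpace ℝ (Fin n))
      (b := (b : ℂ)) (by simpa using hb) 0 0
    have h2 := this.re
    refine h2.congr (Filter.Eventually.of_forall fun y => ?_)
    simp only [zero_mul, add_zero]
    norm_cast
  rw [← ofReal_integral_eq_lintegral_ofReal hint (Filter.Eventually.of_forall fun y => by positivity),
    GaussianFourier.integral_rexp_neg_mul_sq_norm hb]
  simp

lemma heatS_const (n : ℕ) {t : ℝ} (ht : 0 < t) (c : ℝ≥0∞) (x : EuclideanSpace ℝ (Fin n)) :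
    heatS n t (fun _ => c) x = c := by
  unfold heatS
  rw [lintegral_mul_const _ (measurable_heatK' n (by fun_prop) (by fun_prop))]
  have : ∀ y, heatK n (x - y) t = ENNReal.ofReal ((4 * Real.pi * t) ^ (-(n : ℝ) / 2)) *
      ENNReal.ofReal (Real.exp (-(1 / (4 * t)) * ‖y - x‖ ^ 2)) := by
    intro y
    rw [heatK, heatKernel, ENNReal.ofReal_mul (by positivity), norm_sub_rev]
    congr 3
    ring
  simp_rw [this]
  rw [lintegral_const_mul _ (by fun_prop), gauss_lint n (by positivity),
    ← ENNReal.ofReal_mul (by positivity)]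
  have : (4 * Real.pi * t) ^ (-(n : ℝ) / 2) * (Real.pi / (1 / (4 * t))) ^ ((n : ℝ) / 2) = 1 := by
    rw [show Real.pi / (1 / (4 * t)) = 4 * Real.pi * t by field_simp,
      ← Real.rpow_add (by positivity), show -(n : ℝ) / 2 + n / 2 = 0 by ring, Real.rpow_zero]
  rw [this]; simp

lemma heatS_mono (n : ℕ) {t : ℝ} {g h : EuclideanSpace ℝ (Fin n) → ℝ≥0∞} (hgh : ∀ y, g y ≤ h y)
    (x : EuclideanSpace ℝ (Fin n)) : heatS n t g x ≤ heatS n t h x :=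
  lintegral_mono fun y => mul_le_mul_right (hgh y) _

lemma heatS_add (n : ℕ) {t : ℝ} {g h : EuclideanSpace ℝ (Fin n) → ℝ≥0∞} (hg : Measurable g)
    (x : EuclideanSpace ℝ (Fin n)) :
    heatS n t (fun y => g y + h y) x = heatS n t g x + heatS n t h x := by
  unfold heatS
  simp_rw [mul_add]
  exact lintegral_add_left ((measurable_heatK' n (by fun_prop) (by fun_prop)).mul hg) _

lemma heatS_const_mul (n : ℕ) {t : ℝ} {g : EuclideanSpace ℝ (Fin n) → ℝ≥0∞} (hg : Measurable g)
    (c : ℝ≥0∞) (x : EuclideanSpace ℝ (Fin n)) :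
    heatS n t (fun y => c * g y) x = c * heatS n t g x := by
  unfold heatS
  simp_rw [mul_left_comm _ c]
  exact lintegral_const_mul _ ((measurable_heatK' n (by fun_prop) (by fun_prop)).mul hg)

lemma measurable_heatS (n : ℕ) {g : EuclideanSpace ℝ (Fin n) → ℝ≥0∞} (hg : Measurable g) :
    Measurable (fun q : EuclideanSpace ℝ (Fin n) × ℝ => heatS n q.2 g q.1) := by
  unfold heatS
  apply Measurable.lintegral_prod_right'
    (f := fun r : (EuclideanSpace ℝ (Fin n) × ℝ) × EuclideanSpace ℝ (Fin n) =>
      heatK n (r.1.1 - r.2) r.1.2 * g r.2)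
  exact (measurable_heatK' n (by fun_prop) (by fun_prop)).mul (by fun_prop)

lemma measurable_heatS_fix (n : ℕ) {g : EuclideanSpace ℝ (Fin n) → ℝ≥0∞} (hg : Measurable g)
    (t : ℝ) : Measurable (heatS n t g) := by
  unfold heatS
  apply Measurable.lintegral_prod_right'
    (f := fun r : EuclideanSpace ℝ (Fin n) × EuclideanSpace ℝ (Fin n) =>
      heatK n (r.1 - r.2) t * g r.2)
  exact (measurable_heatK' n (by fun_prop) (by fun_prop)).mul (by fun_prop)

lemma heat_exp_id (n : ℕ) {a b : ℝ} (ha : 0 < a) (hb : 0 < b) (x y z : EuclideanSpace ℝ (Fin n)) :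
    Real.exp (-‖x - y‖ ^ 2 / (4 * a)) * Real.exp (-‖y - z‖ ^ 2 / (4 * b)) =
        Real.exp (-‖x - z‖ ^ 2 / (4 * (a + b))) * Real.exp (-((a + b) / (4 * a * b)) *
      ‖y - ((b / (a + b)) • x + (a / (a + b)) • z)‖ ^ 2) := by
    rw [← Real.exp_add, ← Real.exp_add]
    congr 1
    have h1 : x - z = (x - y) + (y - z) := by abel
    have h2 : y - ((b / (a + b)) • x + (a / (a + b)) • z) =
        (a / (a + b)) • (y - z) - (b / (a + b)) • (x - y) := by
      have : y = (a / (a + b)) • y + (b / (a + b)) • y := by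
        rw [← add_smul, ← add_div, div_self (by positivity), one_smul]
      nth_rewrite 1 [this]
      module
    rw [h1, h2]
    generalize x - y = v
    generalize y - z = w
    rw [@norm_add_sq_real, @norm_sub_sq_real, norm_smul, norm_smul, inner_smul_left,
      inner_smul_right, real_inner_comm v w, Real.norm_of_nonneg (by positivity),
      Real.norm_of_nonneg (by positivity)]
    simp only [conj_trivial]
    field_simp
    ring

lemma heat_const_id (n : ℕ) {a b : ℝ} (ha : 0 < a) (hb : 0 < b) :
  (4 * Real.pi * a) ^ (-(n : ℝ) / 2) * (4 * Real.pi * b) ^ (-(n : ℝ) / 2) *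
    (Real.pi / ((a + b) / (4 * a * b))) ^ ((n : ℝ) / 2) =
    (4 * Real.pi * (a + b)) ^ (-(n : ℝ) / 2) := by
  have h3 : (Real.pi / ((a + b) / (4 * a * b))) ^ ((n : ℝ) / 2) =
    ((Real.pi / ((a + b) / (4 * a * b)))⁻¹) ^ (-(n : ℝ) / 2) := by
    rw [Real.inv_rpow (by positivity), ← Real.rpow_neg (by positivity)]
    congr 1; ring
  rw [h3, ← Real.mul_rpow (by positivity) (by positivity),
    ← Real.mul_rpow (by positivity) (by positivity)]
  congr 1
  field_simp

lemma heatK_conv (n : ℕ) {a b : ℝ} (ha : 0 < a) (hb : 0 < b) (x z : EuclideanSpace ℝ (Fin n)) :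
    ∫⁻ y, heatK n (x - y) a * heatK n (y - z) b = heatK n (x - z) (a + b) := by
  have key : ∀ y, heatK n (x - y) a * heatK n (y - z) b =
      ENNReal.ofReal ((4 * Real.pi * a) ^ (-(n : ℝ) / 2) * (4 * Real.pi * b) ^ (-(n : ℝ) / 2) *
        Real.exp (-‖x - z‖ ^ 2 / (4 * (a + b)))) *
      ENNReal.ofReal (Real.exp (-((a + b) / (4 * a * b)) *
        ‖y - ((b / (a + b)) • x + (a / (a + b)) • z)‖ ^ 2)) := by
    intro y
    rw [heatK, heatK, heatKernel, heatKernel, ← ENNReal.ofReal_mul (by positivity),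
      ← ENNReal.ofReal_mul (by positivity)]
    congr 1
    have := heat_exp_id n ha hb x y z
    linear_combination ((4 * Real.pi * a) ^ (-(n : ℝ) / 2) * (4 * Real.pi * b) ^ (-(n : ℝ) / 2)) * this
  simp_rw [key]
  rw [lintegral_const_mul _ (by fun_prop), gauss_lint n (by positivity),
    ← ENNReal.ofReal_mul (by positivity), heatK, heatKernel]
  congr 1
  have := heat_const_id n ha hb
  linear_combination Real.exp (-‖x - z‖ ^ 2 / (4 * (a + b))) * this

lemma heatS_semi (n : ℕ) {a b : ℝ} (ha : 0 < a) (hb : 0 < b)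
    {g : EuclideanSpace ℝ (Fin n) → ℝ≥0∞} (hg : Measurable g) (x : EuclideanSpace ℝ (Fin n)) :
    heatS n a (heatS n b g) x = heatS n (a + b) g x := by
  unfold heatS
  have : ∀ y, heatK n (x - y) a * ∫⁻ z, heatK n (y - z) b * g z =
      ∫⁻ z, heatK n (x - y) a * heatK n (y - z) b * g z := by
    intro y
    rw [← lintegral_const_mul]
    · simp_rw [mul_assoc]
    · exact (measurable_heatK' n (by fun_prop) (by fun_prop)).mul hg
  simp_rw [this]
  rw [lintegral_lintegral_swap]
  · congr 1
    ext z
    rw [lintegral_mul_const, heatK_conv n ha hb]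
    exact (measurable_heatK' n (by fun_prop) (by fun_prop)).mul
      (measurable_heatK' n (by fun_prop) (by fun_prop))
  · apply Measurable.aemeasurable
    exact ((measurable_heatK' n (by fun_prop) (by fun_prop)).mul
      (measurable_heatK' n (by fun_prop) (by fun_prop))).mul (by fun_prop)

lemma oneD {a R : ℝ} (ha : 0 < a) (hR : 0 < R) (hR1 : R < 1) :
    IntegrableOn (fun r : ℝ => r⁻¹ * (-Real.log r) ^ (-1 - a)) (Ioo 0 R) ∧
    ∫ r in Ioo 0 R, r⁻¹ * (-Real.log r) ^ (-1 - a) = (-Real.log R) ^ (-a) / a := by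
  set G : ℝ → ℝ := fun r => (-Real.log r) ^ (-a) / a with hG
  have hcont : ContinuousOn G (Icc 0 R) := by
    intro r hr
    rcases hr.1.eq_or_lt with h | h
    · subst h
      apply ContinuousAt.continuousWithinAt
      have h0 : G 0 = 0 := by simp [hG, Real.zero_rpow (neg_ne_zero.2 ha.ne')]
      rw [continuousAt_iff_punctured_nhds, h0]
      have : Filter.Tendsto (fun r => -Real.log r) (nhdsWithin 0 {0}ᶜ) Filter.atTop :=
        Filter.tendsto_neg_atBot_atTop.comp Real.tendsto_log_nhdsNE_zero
      have h2 := ((tendsto_rpow_neg_atTop ha).comp this).div_const a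
      simpa [hG, Function.comp_def] using h2
    · apply ContinuousAt.continuousWithinAt
      have : Real.log r < 0 := Real.log_neg h (hr.2.trans_lt hR1)
      refine ContinuousAt.div_const (ContinuousAt.rpow_const ?_ (Or.inl (by linarith))) _
      exact (Real.continuousAt_log h.ne').neg
  have hder : ∀ r ∈ Ioo 0 R, HasDerivAt G (r⁻¹ * (-Real.log r) ^ (-1 - a)) r := by
    intro r hr
    have hl : Real.log r < 0 := Real.log_neg hr.1 (hr.2.trans hR1)
    have h0 : HasDerivAt (fun r => -Real.log r) (-r⁻¹) r := (Real.hasDerivAt_log hr.1.ne').neg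
    have := (h0.rpow_const (p := -a) (Or.inl (by linarith))).div_const a
    have h1 : -r⁻¹ * -a * (-Real.log r) ^ (-a - 1) / a = r⁻¹ * (-Real.log r) ^ (-1 - a) := by
      rw [show -a - 1 = -1 - a by ring]
      field_simp
    rw [h1] at this
    exact this
  have hnn : ∀ r ∈ Ioo 0 R, 0 ≤ r⁻¹ * (-Real.log r) ^ (-1 - a) := by
    intro r hr
    have hl : Real.log r < 0 := Real.log_neg hr.1 (hr.2.trans hR1)
    exact mul_nonneg (inv_nonneg.2 hr.1.le) (Real.rpow_nonneg (by linarith) _)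
  have hI := intervalIntegral.integrableOn_deriv_of_nonneg hcont hder hnn
  refine ⟨hI.mono_set Ioo_subset_Ioc_self, ?_⟩
  rw [← integral_Ioc_eq_integral_Ioo, ← intervalIntegral.integral_of_le hR.le,
    intervalIntegral.integral_eq_sub_of_hasDerivAt_of_le hR.le hcont hder
      ((intervalIntegrable_iff_integrableOn_Ioc_of_le hR.le).2 hI)]
  simp [hG, Real.zero_rpow (neg_ne_zero.2 ha.ne')]

lemma oneD_lint {a R : ℝ} (ha : 0 < a) (hR : 0 < R) (hR1 : R < 1) :
    ∫⁻ r in Ioo 0 R, ENNReal.ofReal (r⁻¹ * (-Real.log r) ^ (-1 - a)) =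
      ENNReal.ofReal ((-Real.log R) ^ (-a) / a) := by
  rw [← (oneD ha hR hR1).2, ofReal_integral_eq_lintegral_ofReal (oneD ha hR hR1).1]
  refine (ae_restrict_iff' measurableSet_Ioo).2 (Filter.Eventually.of_forall fun r hr => ?_)
  have hl : Real.log r < 0 := Real.log_neg hr.1 (hr.2.trans hR1)
  exact mul_nonneg (inv_nonneg.2 hr.1.le) (Real.rpow_nonneg (by linarith) _)

noncomputable def hfun (n : ℕ) (a : ℝ) (y : EuclideanSpace ℝ (Fin n)) : ℝ≥0∞ :=
  if ‖y‖ < Real.exp (-1) then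
    ENNReal.ofReal (‖y‖ ^ (-(n : ℝ)) * (-Real.log ‖y‖) ^ (-1 - a)) else 0

lemma measurable_hfun (n : ℕ) (a : ℝ) : Measurable (hfun n a) := by
  unfold hfun
  refine Measurable.ite (measurableSet_lt (by fun_prop) (by fun_prop)) ?_ (by fun_prop)
  fun_prop

lemma radial (n : ℕ) (hn : 1 ≤ n) {a : ℝ} (ha : 0 < a) : ∃ C > (0 : ℝ), ∀ R : ℝ, 0 < R → R < 1 →
    ∫⁻ y in {y : EuclideanSpace ℝ (Fin n) | ‖y‖ < R},
      ENNReal.ofReal (‖y‖ ^ (-(n : ℝ)) * (-Real.log ‖y‖) ^ (-1 - a)) ≤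
      ENNReal.ofReal (C * (-Real.log R) ^ (-a)) := by
  have : Nonempty (Fin n) := ⟨⟨0, hn⟩⟩
  have : Nontrivial (EuclideanSpace ℝ (Fin n)) := inferInstance
  set B := (volume : Measure (EuclideanSpace ℝ (Fin n))).real (Metric.ball 0 1)
  have hB : 0 < B := by
    apply ENNReal.toReal_pos
    · exact (Metric.measure_ball_pos _ _ one_pos).ne'
    · exact measure_ball_lt_top.ne
  have hn0 : (0 : ℝ) < n := by exact_mod_cast hn
  refine ⟨n * B / a, by positivity, fun R hR hR1 => ?_⟩
  set f : ℝ → ℝ := (Iio R).indicator fun r => r ^ (-(n : ℝ)) * (-Real.log r) ^ (-1 - a) with hf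
  have hdim : Module.finrank ℝ (EuclideanSpace ℝ (Fin n)) = n := by simp
  have heq : ∀ r ∈ Ioi (0 : ℝ), r ^ (n - 1) • f r =
      (Ioo 0 R).indicator (fun r : ℝ => r⁻¹ * (-Real.log r) ^ (-1 - a)) r := by
    intro r hr
    have hr : 0 < r := hr
    by_cases h : r < R
    · simp only [hf, smul_eq_mul]
      rw [indicator_of_mem (show r ∈ Iio R from h), indicator_of_mem (show r ∈ Ioo 0 R from ⟨hr, h⟩),
        ← mul_assoc]
      congr 1
      rw [← Real.rpow_natCast, ← Real.rpow_add hr, Nat.cast_sub hn, ← Real.rpow_neg_one]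
      congr 1; push_cast; ring
    · simp [hf, h]
  have hInt : Integrable (fun y : EuclideanSpace ℝ (Fin n) => f ‖y‖) := by
    rw [integrable_fun_norm_addHaar, hdim, integrableOn_congr_fun heq measurableSet_Ioi]
    exact ((oneD ha hR hR1).1.integrable_indicator measurableSet_Ioo).integrableOn
  have hval : ∫ y : EuclideanSpace ℝ (Fin n), f ‖y‖ = n * B / a * (-Real.log R) ^ (-a) := by
    rw [integral_fun_norm_addHaar, hdim, setIntegral_congr_fun measurableSet_Ioi heq,
      setIntegral_indicator measurableSet_Ioo,
      inter_eq_right.2 Ioo_subset_Ioi_self, (oneD ha hR hR1).2]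
    simp only [smul_eq_mul, nsmul_eq_mul]
    ring
  have hnn : ∀ y : EuclideanSpace ℝ (Fin n), 0 ≤ f ‖y‖ := by
    intro y
    by_cases h : ‖y‖ < R
    · rw [hf, indicator_of_mem (show ‖y‖ ∈ Iio R from h)]
      have := Real.log_nonpos (norm_nonneg y) (h.trans hR1).le
      exact mul_nonneg (Real.rpow_nonneg (norm_nonneg y) _) (Real.rpow_nonneg (by linarith) _)
    · simp [hf, h]
  rw [← hval, ofReal_integral_eq_lintegral_ofReal hInt (Filter.Eventually.of_forall hnn)]
  rw [← lintegral_indicator (measurableSet_lt (by fun_prop) (by fun_prop))]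
  apply lintegral_mono
  intro y
  by_cases h : ‖y‖ < R
  · simp [hf, h]
  · simp [h]

lemma small_facts {s : ℝ} (hs : 0 < s) (hs4 : s < Real.exp (-4)) :
    4 < -Real.log s ∧ s < 1 ∧ s ^ (1 / 4 : ℝ) < Real.exp (-1) ∧ s * (-Real.log s) ≤ 1 := by
  have h1 : Real.log s < -4 := by
    rw [Real.log_lt_iff_lt_exp hs]; exact hs4
  refine ⟨by linarith, hs4.trans (by rw [Real.exp_lt_one_iff]; norm_num), ?_, ?_⟩
  · rw [Real.rpow_def_of_pos hs, Real.exp_lt_exp]; linarith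
  · have := Real.log_le_sub_one_of_pos (inv_pos.2 hs)
    rw [Real.log_inv] at this
    calc s * (-Real.log s) ≤ s * (s⁻¹ - 1) := by gcongr
      _ = 1 - s := by field_simp
      _ ≤ 1 := by linarith

lemma hfun_near (n : ℕ) (hn : 1 ≤ n) {s : ℝ} (hs : 0 < s) (hs4 : s < Real.exp (-4))
    {y : EuclideanSpace ℝ (Fin n)} (hy : ‖y‖ < s ^ (1 / 4 : ℝ)) :
    hfun n (n / 2) y ≤ ENNReal.ofReal ((4 : ℝ) ^ ((n : ℝ) / 4)) *
      (ENNReal.ofReal ((-Real.log s) ^ (-(n : ℝ) / 4)) * hfun n (n / 4) y) := by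
  obtain ⟨h1, h2, h3, -⟩ := small_facts hs hs4
  have hn0 : (0 : ℝ) < n := by exact_mod_cast hn
  unfold hfun
  rw [if_pos (hy.trans h3), if_pos (hy.trans h3), ← ENNReal.ofReal_mul (by apply Real.rpow_nonneg; linarith),
    ← ENNReal.ofReal_mul (by positivity)]
  apply ENNReal.ofReal_le_ofReal
  rcases (norm_nonneg y).eq_or_lt with h0 | h0
  · rw [← h0, Real.zero_rpow (by linarith)]; simp
  have hl : -Real.log s / 4 ≤ -Real.log ‖y‖ := by
    have := Real.log_lt_log h0 hy
    rw [Real.log_rpow hs] at this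
    linarith
  have hl0 : 0 < -Real.log ‖y‖ := by linarith
  have e1 : (-Real.log ‖y‖) ^ (-1 - (n : ℝ) / 2) =
      (-Real.log ‖y‖) ^ (-1 - (n : ℝ) / 4) * (-Real.log ‖y‖) ^ (-(n : ℝ) / 4) := by
    rw [← Real.rpow_add hl0]; congr 1; ring
  have e2 : (-Real.log ‖y‖) ^ (-(n : ℝ) / 4) ≤ 4 ^ ((n : ℝ) / 4) * (-Real.log s) ^ (-(n : ℝ) / 4) := by
    calc _ ≤ (-Real.log s / 4) ^ (-(n : ℝ) / 4) :=
          Real.rpow_le_rpow_of_nonpos (by linarith) hl (by linarith)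
      _ = _ := by
          rw [Real.div_rpow (by linarith) (by norm_num), neg_div, Real.rpow_neg (x := 4) (by norm_num)]
          field_simp
  rw [e1]
  have : 0 ≤ ‖y‖ ^ (-(n : ℝ)) * (-Real.log ‖y‖) ^ (-1 - (n : ℝ) / 4) := by positivity
  calc _ = ‖y‖ ^ (-(n : ℝ)) * (-Real.log ‖y‖) ^ (-1 - (n : ℝ) / 4) * (-Real.log ‖y‖) ^ (-(n : ℝ) / 4) := by ring
    _ ≤ ‖y‖ ^ (-(n : ℝ)) * (-Real.log ‖y‖) ^ (-1 - (n : ℝ) / 4) * (4 ^ ((n : ℝ) / 4) * (-Real.log s) ^ (-(n : ℝ) / 4)) := by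
        gcongr
    _ = _ := by ring

lemma hfun_far (n : ℕ) {a s : ℝ} (ha : 0 < a) (hs : 0 < s)
    {y : EuclideanSpace ℝ (Fin n)} (hy : s ^ (1 / 4 : ℝ) ≤ ‖y‖) :
    hfun n a y ≤ ENNReal.ofReal (s ^ (-(n : ℝ) / 4)) := by
  unfold hfun
  split_ifs with h
  · apply ENNReal.ofReal_le_ofReal
    have hs' : 0 < s ^ (1 / 4 : ℝ) := by positivity
    have hl : 1 ≤ -Real.log ‖y‖ := by
      have := Real.log_lt_log (hs'.trans_le hy) h
      rw [Real.log_exp] at this; linarith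
    have h1 : (-Real.log ‖y‖) ^ (-1 - a) ≤ 1 := Real.rpow_le_one_of_one_le_of_nonpos hl (by linarith)
    have h2 : ‖y‖ ^ (-(n : ℝ)) ≤ (s ^ (1 / 4 : ℝ)) ^ (-(n : ℝ)) :=
      Real.rpow_le_rpow_of_nonpos hs' hy (by simp)
    rw [← Real.rpow_mul hs.le, show 1 / 4 * -(n : ℝ) = -(n : ℝ) / 4 by ring] at h2
    calc _ ≤ ‖y‖ ^ (-(n : ℝ)) * 1 := by gcongr
      _ ≤ _ := by simpa using h2
  · simp

noncomputable def zf (n : ℕ) (x : EuclideanSpace ℝ (Fin n)) (s : ℝ) : ℝ≥0∞ :=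
  ENNReal.ofReal ((-Real.log s) ^ (-(n : ℝ) / 4)) * heatS n s (hfun n (n / 4)) x

noncomputable def vf (n : ℕ) (x : EuclideanSpace ℝ (Fin n)) (s : ℝ) : ℝ≥0∞ :=
  heatS n s (hfun n (n / 2)) x

lemma zf_bound (n : ℕ) (hn : 1 ≤ n) : ∃ C > (0 : ℝ), ∀ s : ℝ, 0 < s → s < Real.exp (-4) →
    ∀ x, zf n x s ≤ ENNReal.ofReal (C * (s ^ (-(n : ℝ) / 2) * (-Real.log s) ^ (-(n : ℝ) / 2))) := by
  have hn0 : (0 : ℝ) < n := by exact_mod_cast hn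
  obtain ⟨C, hC, hrad⟩ := radial n hn (a := n / 4) (by positivity)
  refine ⟨C * 4 ^ ((n : ℝ) / 4) + 1, by positivity, fun s hs hs4 x => ?_⟩
  obtain ⟨h1, h2, h3, h5⟩ := small_facts hs hs4
  have hL : 0 < -Real.log s := by linarith
  set L := -Real.log s with hLdef
  have hR0 : 0 < s ^ (1 / 4 : ℝ) := by positivity
  have hR1 : s ^ (1 / 4 : ℝ) < 1 := h3.trans (by rw [Real.exp_lt_one_iff]; norm_num)
  have hset : MeasurableSet {y : EuclideanSpace ℝ (Fin n) | ‖y‖ < s ^ (1 / 4 : ℝ)} :=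
    measurableSet_lt (by fun_prop) (by fun_prop)
  have hS : heatS n s (hfun n (n / 4)) x ≤ ENNReal.ofReal (s ^ (-(n : ℝ) / 2) *
      (C * (4 ^ ((n : ℝ) / 4) * L ^ (-(n : ℝ) / 4)))) + ENNReal.ofReal (s ^ (-(n : ℝ) / 4)) := by
    calc heatS n s (hfun n (n / 4)) x
        ≤ heatS n s (fun y => {y : EuclideanSpace ℝ (Fin n) | ‖y‖ < s ^ (1 / 4 : ℝ)}.indicator
            (hfun n (n / 4)) y + ENNReal.ofReal (s ^ (-(n : ℝ) / 4))) x := by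
          apply heatS_mono
          intro y
          by_cases hy : ‖y‖ < s ^ (1 / 4 : ℝ)
          · rw [indicator_of_mem (by exact hy)]; exact le_self_add
          · exact (hfun_far n (by positivity) hs (not_lt.1 hy)).trans le_add_self
      _ = heatS n s ({y : EuclideanSpace ℝ (Fin n) | ‖y‖ < s ^ (1 / 4 : ℝ)}.indicator
            (hfun n (n / 4))) x + ENNReal.ofReal (s ^ (-(n : ℝ) / 4)) := by
          rw [heatS_add n ((measurable_hfun n _).indicator hset), heatS_const n hs]
      _ ≤ _ := by
          gcongr
          calc _ ≤ ∫⁻ y, ENNReal.ofReal (s ^ (-(n : ℝ) / 2)) *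
                {y : EuclideanSpace ℝ (Fin n) | ‖y‖ < s ^ (1 / 4 : ℝ)}.indicator (hfun n (n / 4)) y := by
                unfold heatS
                gcongr
                exact heatK_le n _ hs
            _ = ENNReal.ofReal (s ^ (-(n : ℝ) / 2)) *
                ∫⁻ y in {y : EuclideanSpace ℝ (Fin n) | ‖y‖ < s ^ (1 / 4 : ℝ)}, hfun n (n / 4) y := by
                rw [lintegral_const_mul _ ((measurable_hfun n _).indicator hset),
                  lintegral_indicator hset]
            _ ≤ ENNReal.ofReal (s ^ (-(n : ℝ) / 2)) *
                ENNReal.ofReal (C * (-Real.log (s ^ (1 / 4 : ℝ))) ^ (-((n : ℝ) / 4))) := by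
                gcongr
                refine le_trans ?_ (hrad _ hR0 hR1)
                apply lintegral_mono
                intro y
                unfold hfun
                dsimp only
                split_ifs
                · exact le_rfl
                · simp
            _ = _ := by
                rw [← ENNReal.ofReal_mul (by positivity)]
                congr 3
                rw [Real.log_rpow hs, show -(1 / 4 * Real.log s) = L / 4 by rw [hLdef]; ring,
                  Real.div_rpow hL.le (by norm_num), Real.rpow_neg (x := 4) (by norm_num), neg_div]
                field_simp
  unfold zf
  calc _ ≤ ENNReal.ofReal (L ^ (-(n : ℝ) / 4)) * (ENNReal.ofReal (s ^ (-(n : ℝ) / 2) *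
      (C * (4 ^ ((n : ℝ) / 4) * L ^ (-(n : ℝ) / 4)))) + ENNReal.ofReal (s ^ (-(n : ℝ) / 4))) := by gcongr
    _ ≤ _ := by
      rw [← ENNReal.ofReal_add (by positivity) (by positivity), ← ENNReal.ofReal_mul (by positivity)]
      apply ENNReal.ofReal_le_ofReal
      have e1 : L ^ (-(n : ℝ) / 2) = L ^ (-(n : ℝ) / 4) * L ^ (-(n : ℝ) / 4) := by
        rw [← Real.rpow_add hL]; congr 1; ring
      have e2 : s ^ (-(n : ℝ) / 4) ≤ s ^ (-(n : ℝ) / 2) * L ^ (-(n : ℝ) / 4) := by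
        have : s ^ (-(n : ℝ) / 2) = s ^ (-(n : ℝ) / 4) * s ^ (-(n : ℝ) / 4) := by
          rw [← Real.rpow_add hs]; congr 1; ring
        rw [this, mul_assoc, ← Real.mul_rpow hs.le hL.le]
        have : 1 ≤ (s * L) ^ (-(n : ℝ) / 4) :=
          Real.one_le_rpow_of_pos_of_le_one_of_nonpos (by positivity) h5 (by linarith)
        nlinarith [Real.rpow_nonneg hs.le (-(n : ℝ) / 4)]
      rw [e1]
      have : 0 ≤ L ^ (-(n : ℝ) / 4) := by positivity
      nlinarith [mul_le_mul_of_nonneg_left e2 this]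

lemma vf_split (n : ℕ) (hn : 1 ≤ n) {s : ℝ} (hs : 0 < s) (hs4 : s < Real.exp (-4))
    (x : EuclideanSpace ℝ (Fin n)) : ∃ v2 : ℝ≥0∞,
    vf n x s ≤ ENNReal.ofReal ((4 : ℝ) ^ ((n : ℝ) / 4)) * zf n x s + v2 ∧ v2 ≤ vf n x s ∧
    v2 ≤ ENNReal.ofReal (s ^ (-(n : ℝ) / 4)) := by
  have hn0 : (0 : ℝ) < n := by exact_mod_cast hn
  have hset : MeasurableSet {y : EuclideanSpace ℝ (Fin n) | s ^ (1 / 4 : ℝ) ≤ ‖y‖} :=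
    measurableSet_le (by fun_prop) (by fun_prop)
  refine ⟨heatS n s ({y : EuclideanSpace ℝ (Fin n) | s ^ (1 / 4 : ℝ) ≤ ‖y‖}.indicator
    (hfun n (n / 2))) x, ?_, ?_, ?_⟩
  · unfold vf zf
    rw [← heatS_const_mul n (measurable_hfun n _), ← heatS_const_mul n (by
      exact (measurable_hfun n _).const_mul _), ← heatS_add n (by
      exact ((measurable_hfun n _).const_mul _).const_mul _)]
    apply heatS_mono
    intro y
    by_cases hy : s ^ (1 / 4 : ℝ) ≤ ‖y‖
    · rw [indicator_of_mem (by exact hy)]; exact le_add_self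
    · exact (hfun_near n hn hs hs4 (not_le.1 hy)).trans le_self_add
  · apply heatS_mono
    intro y
    exact indicator_le_self _ _ _
  · rw [← heatS_const n hs (ENNReal.ofReal (s ^ (-(n : ℝ) / 4))) x]
    apply heatS_mono
    intro y
    by_cases hy : s ^ (1 / 4 : ℝ) ≤ ‖y‖
    · rw [indicator_of_mem (by exact hy)]; exact hfun_far n (by positivity) hs hy
    · rw [indicator_of_notMem (by exact hy)]; simp

lemma three_pow {p : ℝ} (hp : 0 ≤ p) (a b c : ℝ≥0∞) :
    (a + b + c) ^ p ≤ 3 ^ p * (a ^ p + b ^ p + c ^ p) := by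
  set m := max (max a b) c with hm
  have ha : a ≤ m := (le_max_left a b).trans (le_max_left _ _)
  have hb : b ≤ m := (le_max_right a b).trans (le_max_left _ _)
  have hc : c ≤ m := le_max_right _ _
  have h1 : a + b + c ≤ 3 * m := by
    calc a + b + c ≤ m + m + m := by gcongr
      _ = 3 * m := by ring
  calc (a + b + c) ^ p ≤ (3 * m) ^ p := ENNReal.rpow_le_rpow h1 hp
    _ = 3 ^ p * m ^ p := ENNReal.mul_rpow_of_nonneg _ _ hp
    _ ≤ _ := by
      gcongr
      rcases max_choice (max a b) c with h | h
      · rcases max_choice a b with h' | h'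
        · rw [hm, h, h', add_assoc]; exact le_self_add
        · rw [hm, h, h', add_right_comm]; exact le_add_self
      · rw [hm, h]; exact le_add_self

lemma pow_split {q : ℝ} (hq : 0 ≤ q) {e a b c : ℝ≥0∞} (hab : a ≤ b) (hac : a ≤ c) :
    (e * a) ^ (1 + q) ≤ e ^ (1 + q) * (b ^ q * c) := by
  rw [ENNReal.mul_rpow_of_nonneg _ _ (by linarith), ENNReal.rpow_add_of_nonneg (x := a) _ _ zero_le_one hq,
    ENNReal.rpow_one, mul_comm a]
  gcongr

noncomputable def Uf (n : ℕ) (e k : ℝ≥0∞) (x : EuclideanSpace ℝ (Fin n)) (s : ℝ) : ℝ≥0∞ :=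
  2 * (e * vf n x s + e * zf n x s + k)

lemma Uf_pow (n : ℕ) (hn : 1 ≤ n) {p : ℝ} (hp : p = 1 + 2 / n) : ∃ D > (0 : ℝ), ∀ e k : ℝ≥0∞,
    ∀ s : ℝ, 0 < s → s < Real.exp (-4) → ∀ x,
    Uf n e k x s ^ p ≤ ENNReal.ofReal D * e ^ p * ENNReal.ofReal (s⁻¹ * (-Real.log s) ^ (-1 - (n : ℝ) / 4)) *
        heatS n s (hfun n (n / 4)) x +
      ENNReal.ofReal D * e ^ p * ENNReal.ofReal (s ^ (-1 / 2 : ℝ)) * heatS n s (hfun n (n / 2)) x +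
      ENNReal.ofReal D * k ^ p := by
  have hn0 : (0 : ℝ) < n := by exact_mod_cast hn
  obtain ⟨C, hC, hz⟩ := zf_bound n hn
  have hp0 : 0 ≤ p := by rw [hp]; positivity
  set M : ℝ := 2 * (4 ^ ((n : ℝ) / 4) + 1) with hM
  have hM0 : 0 < M := by positivity
  set D0 : ℝ := M ^ p * 3 ^ p with hD0
  have hD0p : 0 < D0 := by positivity
  refine ⟨D0 * (C ^ (2 / n : ℝ) + 1), by positivity, fun e k s hs hs4 x => ?_⟩
  obtain ⟨h1, h2, h3, h5⟩ := small_facts hs hs4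
  have hL : 0 < -Real.log s := by linarith
  set L := -Real.log s with hLdef
  obtain ⟨v2, hv, hv2, hv3⟩ := vf_split n hn hs hs4 x
  have hU : Uf n e k x s ≤ ENNReal.ofReal M * (e * zf n x s + e * v2 + k) := by
    have hMe : ENNReal.ofReal M = 2 * (ENNReal.ofReal (4 ^ ((n : ℝ) / 4)) + 1) := by
      rw [hM, ENNReal.ofReal_mul (by norm_num), ENNReal.ofReal_add (by positivity) (by norm_num)]
      simp
    rw [hMe]
    unfold Uf
    rw [mul_assoc]
    gcongr
    calc e * vf n x s + e * zf n x s + k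
        ≤ e * (ENNReal.ofReal (4 ^ ((n : ℝ) / 4)) * zf n x s + v2) + e * zf n x s + k := by gcongr
      _ ≤ e * (ENNReal.ofReal (4 ^ ((n : ℝ) / 4)) * zf n x s + v2) + e * zf n x s + k +
          ENNReal.ofReal (4 ^ ((n : ℝ) / 4)) * (e * v2 + k) := le_self_add
      _ = _ := by ring
  have hz1 : (e * zf n x s) ^ p ≤ e ^ p * (ENNReal.ofReal (C ^ (2 / n : ℝ) * (s⁻¹ * L⁻¹)) * zf n x s) := by
    rw [hp]
    refine (pow_split (by positivity) (hz s hs hs4 x) le_rfl).trans (le_of_eq ?_)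
    rw [ENNReal.ofReal_rpow_of_nonneg (by positivity) (by positivity),
      Real.mul_rpow hC.le (by positivity), Real.mul_rpow (by positivity) (by positivity),
      ← Real.rpow_mul hs.le, ← Real.rpow_mul hL.le,
      show -(n : ℝ) / 2 * (2 / n) = -1 by field_simp, Real.rpow_neg_one, Real.rpow_neg_one]
  have hz2 : (e * v2) ^ p ≤ e ^ p * (ENNReal.ofReal (s ^ (-1 / 2 : ℝ)) * vf n x s) := by
    rw [hp]
    refine (pow_split (by positivity) hv3 hv2).trans (le_of_eq ?_)
    rw [ENNReal.ofReal_rpow_of_nonneg (by positivity) (by positivity), ← Real.rpow_mul hs.le,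
      show -(n : ℝ) / 4 * (2 / n) = -1 / 2 by field_simp; norm_num]
  have hzz : ENNReal.ofReal (C ^ (2 / n : ℝ) * (s⁻¹ * L⁻¹)) * zf n x s =
      ENNReal.ofReal (C ^ (2 / n : ℝ)) * ENNReal.ofReal (s⁻¹ * L ^ (-1 - (n : ℝ) / 4)) *
        heatS n s (hfun n (n / 4)) x := by
    unfold zf
    rw [← mul_assoc, ← ENNReal.ofReal_mul (by positivity), ← ENNReal.ofReal_mul (by positivity)]
    congr 2
    rw [← hLdef, show -1 - (n : ℝ) / 4 = -1 + -(n : ℝ) / 4 by ring, Real.rpow_add hL, Real.rpow_neg_one]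
    ring
  rw [hzz] at hz1
  have hDD : ENNReal.ofReal (D0 * (C ^ (2 / n : ℝ) + 1)) =
      ENNReal.ofReal D0 * (ENNReal.ofReal (C ^ (2 / n : ℝ)) + 1) := by
    rw [ENNReal.ofReal_mul hD0p.le, ENNReal.ofReal_add (by positivity) (by norm_num)]; simp
  have hD0e : ENNReal.ofReal M ^ p * 3 ^ p = ENNReal.ofReal D0 := by
    rw [hD0, ENNReal.ofReal_mul (p := M ^ p) (by positivity), ENNReal.ofReal_rpow_of_nonneg hM0.le hp0,
      ← ENNReal.ofReal_rpow_of_nonneg (show (0 : ℝ) ≤ 3 by norm_num) hp0]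
    simp
  rw [hDD]
  set A := ENNReal.ofReal (C ^ (2 / n : ℝ))
  set w := heatS n s (hfun n (n / 4)) x
  set a := ENNReal.ofReal (s⁻¹ * L ^ (-1 - (n : ℝ) / 4))
  set b := ENNReal.ofReal (s ^ (-1 / 2 : ℝ))
  change _ ≤ ENNReal.ofReal D0 * (A + 1) * e ^ p * a * w + ENNReal.ofReal D0 * (A + 1) * e ^ p * b * vf n x s + _
  calc Uf n e k x s ^ p ≤ (ENNReal.ofReal M * (e * zf n x s + e * v2 + k)) ^ p :=
        ENNReal.rpow_le_rpow hU hp0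
    _ = ENNReal.ofReal M ^ p * (e * zf n x s + e * v2 + k) ^ p := ENNReal.mul_rpow_of_nonneg _ _ hp0
    _ ≤ ENNReal.ofReal M ^ p * (3 ^ p * ((e * zf n x s) ^ p + (e * v2) ^ p + k ^ p)) := by
        gcongr; exact three_pow hp0 _ _ _
    _ = ENNReal.ofReal D0 * ((e * zf n x s) ^ p + (e * v2) ^ p + k ^ p) := by
        rw [← mul_assoc, hD0e]
    _ ≤ ENNReal.ofReal D0 * (e ^ p * (A * a * w) + e ^ p * (b * vf n x s) + k ^ p) := by gcongr
    _ ≤ ENNReal.ofReal D0 * (e ^ p * (A * a * w) + e ^ p * (b * vf n x s) + k ^ p) +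
        ENNReal.ofReal D0 * (e ^ p * (a * w) + A * e ^ p * (b * vf n x s) + A * k ^ p) := le_self_add
    _ = _ := by ring

lemma sqrt_lint {t : ℝ} (ht : 0 < t) (ht1 : t < 1) :
    ∫⁻ s in Ioo 0 t, ENNReal.ofReal (s ^ (-1 / 2 : ℝ)) ≤ ENNReal.ofReal 2 := by
  have hI : IntervalIntegrable (fun s : ℝ => s ^ (-1 / 2 : ℝ)) volume 0 t :=
    intervalIntegral.intervalIntegrable_rpow' (by norm_num)
  have hI' := (intervalIntegrable_iff_integrableOn_Ioc_of_le ht.le).1 hI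
  rw [← ofReal_integral_eq_lintegral_ofReal (hI'.mono_set Ioo_subset_Ioc_self)]
  · apply ENNReal.ofReal_le_ofReal
    rw [← integral_Ioc_eq_integral_Ioo, ← intervalIntegral.integral_of_le ht.le,
      integral_rpow (by norm_num)]
    have : t ^ (-1 / 2 + 1 : ℝ) ≤ 1 := Real.rpow_le_one ht.le ht1.le (by norm_num)
    rw [Real.zero_rpow (by norm_num)]
    norm_num at this ⊢
    linarith
  · refine (ae_restrict_iff' measurableSet_Ioo).2 (Filter.Eventually.of_forall fun r hr => ?_)
    exact Real.rpow_nonneg hr.1.le _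

lemma Uf_duhamel (n : ℕ) (hn : 1 ≤ n) {p : ℝ} (hp : p = 1 + 2 / n) : ∃ D > (0 : ℝ), ∀ e k : ℝ≥0∞,
    ∀ t : ℝ, 0 < t → t < Real.exp (-4) → ∀ x,
    ∫⁻ s in Ioo 0 t, ∫⁻ y, heatK n (x - y) (t - s) * Uf n e k y s ^ p ≤
      ENNReal.ofReal D * (e ^ p * zf n x t + e ^ p * vf n x t + ENNReal.ofReal t * k ^ p) := by
  have hn0 : (0 : ℝ) < n := by exact_mod_cast hn
  obtain ⟨D, hD, hU⟩ := Uf_pow n hn hp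
  refine ⟨D * (4 / n + 2), by positivity, fun e k t ht ht4 x => ?_⟩
  obtain ⟨h1, h2, h3, h5⟩ := small_facts ht ht4
  have hL : 0 < -Real.log t := by linarith
  have hstep : ∀ s ∈ Ioo 0 t, ∫⁻ y, heatK n (x - y) (t - s) * Uf n e k y s ^ p ≤
      ENNReal.ofReal D * e ^ p * heatS n t (hfun n (n / 4)) x *
        ENNReal.ofReal (s⁻¹ * (-Real.log s) ^ (-1 - (n : ℝ) / 4)) +
      ENNReal.ofReal D * e ^ p * vf n x t * ENNReal.ofReal (s ^ (-1 / 2 : ℝ)) +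
      ENNReal.ofReal D * k ^ p := by
    intro s hs
    have hts : 0 < t - s := by linarith [hs.2]
    have m1 := measurable_heatS_fix n (measurable_hfun n (n / 4)) s
    have m2 := measurable_heatS_fix n (measurable_hfun n (n / 2)) s
    calc _ ≤ heatS n (t - s) (fun y => _) x := heatS_mono n (fun y => hU e k s hs.1 (hs.2.trans ht4) y) x
      _ = _ := by
        rw [heatS_add n (by exact (m1.const_mul _).add (m2.const_mul _)), heatS_add n (m1.const_mul _),
          heatS_const n hts, heatS_const_mul n m1, heatS_const_mul n m2,
          heatS_semi n hts hs.1 (measurable_hfun n _), heatS_semi n hts hs.1 (measurable_hfun n _),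
          sub_add_cancel]
        unfold vf
        ring
  calc _ ≤ _ := setLIntegral_mono' measurableSet_Ioo hstep
    _ = ENNReal.ofReal D * e ^ p * heatS n t (hfun n (n / 4)) x *
          ENNReal.ofReal ((-Real.log t) ^ (-((n : ℝ) / 4)) / (n / 4)) +
        ENNReal.ofReal D * e ^ p * vf n x t * (∫⁻ s in Ioo 0 t, ENNReal.ofReal (s ^ (-1 / 2 : ℝ))) +
        ENNReal.ofReal D * k ^ p * ENNReal.ofReal t := by
      rw [lintegral_add_left (by fun_prop), lintegral_add_left (by fun_prop),
        lintegral_const_mul _ (by fun_prop), lintegral_const_mul _ (by fun_prop),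
        oneD_lint (by positivity) ht h2]
      simp
    _ ≤ ENNReal.ofReal D * e ^ p * heatS n t (hfun n (n / 4)) x *
          ENNReal.ofReal ((-Real.log t) ^ (-((n : ℝ) / 4)) / (n / 4)) +
        ENNReal.ofReal D * e ^ p * vf n x t * ENNReal.ofReal 2 +
        ENNReal.ofReal D * k ^ p * ENNReal.ofReal t := by
      gcongr; exact sqrt_lint ht h2
    _ = ENNReal.ofReal D * (ENNReal.ofReal (4 / n) * (e ^ p * zf n x t) +
          ENNReal.ofReal 2 * (e ^ p * vf n x t) + ENNReal.ofReal t * k ^ p) := by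
      have : ENNReal.ofReal ((-Real.log t) ^ (-((n : ℝ) / 4)) / (n / 4)) =
          ENNReal.ofReal (4 / n) * ENNReal.ofReal ((-Real.log t) ^ (-(n : ℝ) / 4)) := by
        rw [← ENNReal.ofReal_mul (by positivity), neg_div]
        congr 1
        field_simp
      rw [this]
      unfold zf
      ring
    _ ≤ _ := by
      rw [ENNReal.ofReal_mul hD.le, mul_assoc]
      gcongr
      rw [mul_add, mul_add]
      refine add_le_add (add_le_add ?_ ?_) ?_
      · gcongr
        linarith
      · gcongr
        have : 0 < (4 : ℝ) / n := by positivity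
        linarith
      · refine le_mul_of_one_le_left zero_le ?_
        rw [← ENNReal.ofReal_one]
        apply ENNReal.ofReal_le_ofReal
        have : 0 < (4 : ℝ) / n := by positivity
        linarith

noncomputable def Fnl (p r : ℝ) : ℝ := |r| ^ (p - 1) * r

lemma Fnl_cont {p : ℝ} (hp : 1 ≤ p) : Continuous (Fnl p) := by
  unfold Fnl
  exact (continuous_abs.rpow_const (fun x => Or.inr (by linarith))).mul continuous_id

lemma Fnl_neg (p r : ℝ) : Fnl p (-r) = -Fnl p r := by simp [Fnl]

lemma Fnl_mono {p : ℝ} (hp : 1 ≤ p) : Monotone (Fnl p) := by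
  have key : ∀ a b : ℝ, 0 ≤ a → a ≤ b → Fnl p a ≤ Fnl p b := by
    intro a b ha hab
    unfold Fnl
    rw [abs_of_nonneg ha, abs_of_nonneg (ha.trans hab)]
    exact mul_le_mul (Real.rpow_le_rpow ha hab (by linarith)) hab ha
      (Real.rpow_nonneg (ha.trans hab) _)
  have nn : ∀ a : ℝ, 0 ≤ a → 0 ≤ Fnl p a := fun a ha => by unfold Fnl; positivity
  intro a b hab
  rcases le_total 0 a with ha | ha
  · exact key a b ha hab
  · rcases le_total 0 b with hb | hb
    · have h1 := nn (-a) (by linarith)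
      rw [Fnl_neg] at h1
      linarith [nn b hb]
    · have := key (-b) (-a) (by linarith) (by linarith)
      rw [Fnl_neg, Fnl_neg] at this
      linarith

lemma Fnl_enorm {p : ℝ} (hp : 1 ≤ p) (r : ℝ) : ‖Fnl p r‖ₑ = ‖r‖ₑ ^ p := by
  unfold Fnl
  rw [enorm_mul, Real.enorm_rpow_of_nonneg (abs_nonneg r) (by linarith)]
  have : ‖|r|‖ₑ = ‖r‖ₑ := by rw [Real.enorm_abs]
  rw [this]
  nth_rewrite 2 [← ENNReal.rpow_one ‖r‖ₑ]
  rw [← ENNReal.rpow_add_of_nonneg _ _ (by linarith) zero_le_one, sub_add_cancel]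

noncomputable def nlInt (n : ℕ) (p : ℝ) (u : EuclideanSpace ℝ (Fin n) → ℝ → ℝ)
    (x : EuclideanSpace ℝ (Fin n)) (t : ℝ) (ys : EuclideanSpace ℝ (Fin n) × ℝ) : ℝ :=
  heatKernel n (x - ys.1) (t - ys.2) * Fnl p (u ys.1 ys.2)

noncomputable def Phi (n : ℕ) (p : ℝ) (φ : EuclideanSpace ℝ (Fin n) → ℝ)
    (u : EuclideanSpace ℝ (Fin n) → ℝ → ℝ) (x : EuclideanSpace ℝ (Fin n)) (t : ℝ) : ℝ :=
  (∫ y, heatKernel n (x - y) t * φ y) +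
    ∫ ys, nlInt n p u x t ys ∂(volume.prod (volume.restrict (Ioo 0 t)))

lemma measurable_nlInt (n : ℕ) {p : ℝ} (hp : 1 ≤ p) {u : EuclideanSpace ℝ (Fin n) → ℝ → ℝ}
    (hu : Measurable (fun q : EuclideanSpace ℝ (Fin n) × ℝ => u q.1 q.2))
    (x : EuclideanSpace ℝ (Fin n)) (t : ℝ) : Measurable (nlInt n p u x t) := by
  unfold nlInt
  exact (measurable_heatKernel' n (by fun_prop) (by fun_prop)).mul ((Fnl_cont hp).measurable.comp hu)

lemma measurable_Phi (n : ℕ) {p : ℝ} (hp : 1 ≤ p) {φ : EuclideanSpace ℝ (Fin n) → ℝ}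
    (hφ : Measurable φ) {u : EuclideanSpace ℝ (Fin n) → ℝ → ℝ}
    (hu : Measurable (fun q : EuclideanSpace ℝ (Fin n) × ℝ => u q.1 q.2)) :
    Measurable (fun q : EuclideanSpace ℝ (Fin n) × ℝ => Phi n p φ u q.1 q.2) := by
  unfold Phi
  apply Measurable.add
  · have h : Measurable (fun r : (EuclideanSpace ℝ (Fin n) × ℝ) × EuclideanSpace ℝ (Fin n) =>
        heatKernel n (r.1.1 - r.2) r.1.2 * φ r.2) :=
      (measurable_heatKernel' n (by fun_prop) (by fun_prop)).mul (by fun_prop)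
    exact (h.stronglyMeasurable.integral_prod_right (ν := volume)).measurable
  · have hset : MeasurableSet {r : (EuclideanSpace ℝ (Fin n) × ℝ) × (EuclideanSpace ℝ (Fin n) × ℝ) |
        0 < r.2.2 ∧ r.2.2 < r.1.2} := by
      have h1 : MeasurableSet {r : (EuclideanSpace ℝ (Fin n) × ℝ) × (EuclideanSpace ℝ (Fin n) × ℝ) |
        (0 : ℝ) < r.2.2} := measurableSet_lt (by fun_prop) (by fun_prop)
      have h2 : MeasurableSet {r : (EuclideanSpace ℝ (Fin n) × ℝ) × (EuclideanSpace ℝ (Fin n) × ℝ) |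
        r.2.2 < r.1.2} := measurableSet_lt (by fun_prop) (by fun_prop)
      exact h1.inter h2
    have h : Measurable ({r : (EuclideanSpace ℝ (Fin n) × ℝ) × (EuclideanSpace ℝ (Fin n) × ℝ) |
        0 < r.2.2 ∧ r.2.2 < r.1.2}.indicator (fun r => nlInt n p u r.1.1 r.1.2 r.2)) := by
      apply Measurable.indicator _ hset
      unfold nlInt
      exact (measurable_heatKernel' n (by fun_prop) (by fun_prop)).mul
        ((Fnl_cont hp).measurable.comp (hu.comp measurable_snd))
    have h2 := (h.stronglyMeasurable.integral_prod_right'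
      (ν := (volume : Measure (EuclideanSpace ℝ (Fin n))).prod (volume : Measure ℝ))).measurable
    convert h2 using 2 with q
    have e : (volume : Measure (EuclideanSpace ℝ (Fin n))).prod (volume.restrict (Ioo 0 q.2)) =
        ((volume : Measure (EuclideanSpace ℝ (Fin n))).prod (volume : Measure ℝ)).restrict
          (univ ×ˢ Ioo 0 q.2) := by
      rw [← Measure.prod_restrict, Measure.restrict_univ]
    rw [e, ← integral_indicator (MeasurableSet.univ.prod measurableSet_Ioo)]
    congr 1
    ext ys
    by_cases hys : 0 < ys.2 ∧ ys.2 < q.2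
    · rw [indicator_of_mem (by simpa using hys), indicator_of_mem (by simpa using hys)]
    · rw [indicator_of_notMem (by simpa using hys), indicator_of_notMem (by simpa using hys)]

lemma iterate_sol (n : ℕ) {p T : ℝ} (hp : 1 ≤ p) {φ : EuclideanSpace ℝ (Fin n) → ℝ}
    (hφ : Measurable φ) (V : EuclideanSpace ℝ (Fin n) → ℝ → ℝ≥0∞)
    (hVm : Measurable (fun q : EuclideanSpace ℝ (Fin n) × ℝ => V q.1 q.2))
    (hVfin : ∀ x t, 0 < t → t < T → V x t < ∞)
    (hsup : ∀ x t, 0 < t → t < T → heatS n t (fun y => ‖φ y‖ₑ) x +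
      ∫⁻ s in Ioo 0 t, ∫⁻ y, heatK n (x - y) (t - s) * V y s ^ p ≤ V x t) :
    ∃ u : EuclideanSpace ℝ (Fin n) → ℝ → ℝ, IsSolution n p T φ u := by
  have hp0 : 0 ≤ p := by linarith
  -- linear part
  have hlin : ∀ x t, 0 < t → t < T →
      ∫⁻ y, ‖heatKernel n (x - y) t * φ y‖ₑ = heatS n t (fun y => ‖φ y‖ₑ) x := by
    intro x t ht _
    unfold heatS heatK
    congr 1; ext y
    rw [enorm_mul, Real.enorm_of_nonneg (heatKernel_nonneg n _ ht)]
  have hlinI : ∀ x t, 0 < t → t < T → Integrable (fun y => heatKernel n (x - y) t * φ y) volume := by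
    intro x t ht hT
    refine ⟨((measurable_heatKernel' n (by fun_prop) (by fun_prop)).mul hφ).aestronglyMeasurable, ?_⟩
    rw [HasFiniteIntegral, hlin x t ht hT]
    exact (le_self_add.trans (hsup x t ht hT)).trans_lt (hVfin x t ht hT)
  -- nonlinear part
  have hnl : ∀ u : EuclideanSpace ℝ (Fin n) → ℝ → ℝ,
      Measurable (fun q : EuclideanSpace ℝ (Fin n) × ℝ => u q.1 q.2) →
      (∀ y s, 0 < s → s < T → ‖u y s‖ₑ ≤ V y s) → ∀ x t, 0 < t → t < T →
      ∫⁻ ys, ‖nlInt n p u x t ys‖ₑ ∂(volume.prod (volume.restrict (Ioo 0 t))) ≤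
        ∫⁻ s in Ioo 0 t, ∫⁻ y, heatK n (x - y) (t - s) * V y s ^ p := by
    intro u hu hub x t ht hT
    rw [lintegral_prod_symm' _ (measurable_nlInt n hp hu x t).enorm]
    apply setLIntegral_mono' measurableSet_Ioo
    intro s hs
    apply lintegral_mono
    intro y
    simp only [nlInt]
    rw [enorm_mul, Real.enorm_of_nonneg (heatKernel_nonneg n _ (by linarith [hs.2])), Fnl_enorm hp]
    unfold heatK
    gcongr
    exact hub y s hs.1 (hs.2.trans hT)
  have hnlI : ∀ u : EuclideanSpace ℝ (Fin n) → ℝ → ℝ,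
      Measurable (fun q : EuclideanSpace ℝ (Fin n) × ℝ => u q.1 q.2) →
      (∀ y s, 0 < s → s < T → ‖u y s‖ₑ ≤ V y s) → ∀ x t, 0 < t → t < T →
      Integrable (nlInt n p u x t) (volume.prod (volume.restrict (Ioo 0 t))) := by
    intro u hu hub x t ht hT
    refine ⟨(measurable_nlInt n hp hu x t).aestronglyMeasurable, ?_⟩
    exact ((hnl u hu hub x t ht hT).trans (le_add_self.trans (hsup x t ht hT))).trans_lt
      (hVfin x t ht hT)
  have hPb : ∀ u : EuclideanSpace ℝ (Fin n) → ℝ → ℝ,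
      Measurable (fun q : EuclideanSpace ℝ (Fin n) × ℝ => u q.1 q.2) →
      (∀ y s, 0 < s → s < T → ‖u y s‖ₑ ≤ V y s) → ∀ x t, 0 < t → t < T →
      ‖Phi n p φ u x t‖ₑ ≤ V x t := by
    intro u hu hub x t ht hT
    unfold Phi
    refine (enorm_add_le _ _).trans ((add_le_add ((enorm_integral_le_lintegral_enorm _).trans
      (hlin x t ht hT).le) ((enorm_integral_le_lintegral_enorm _).trans
      (hnl u hu hub x t ht hT))).trans (hsup x t ht hT))
  -- the iteration
  let U : ℕ → EuclideanSpace ℝ (Fin n) → ℝ → ℝ :=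
    fun k => Nat.rec (fun x t => -(V x t).toReal) (fun _ u => Phi n p φ u) k
  have hU0 : U 0 = fun x t => -(V x t).toReal := rfl
  have hUs : ∀ k, U (k + 1) = Phi n p φ (U k) := fun k => rfl
  have hUm : ∀ k, Measurable (fun q : EuclideanSpace ℝ (Fin n) × ℝ => U k q.1 q.2) := by
    intro k
    induction k with
    | zero => rw [hU0]; exact hVm.ennreal_toReal.neg
    | succ k ih => rw [hUs]; exact measurable_Phi n hp hφ ih
  have hUb : ∀ k, ∀ y s, 0 < s → s < T → ‖U k y s‖ₑ ≤ V y s := by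
    intro k
    induction k with
    | zero =>
      intro y s hs hT
      rw [hU0]
      simp only [enorm_neg]
      rw [Real.enorm_of_nonneg ENNReal.toReal_nonneg]
      exact ENNReal.ofReal_toReal_le
    | succ k ih => rw [hUs]; exact hPb _ (hUm k) ih
  have habs : ∀ r : ℝ, ∀ y s, 0 < s → s < T → ‖r‖ₑ ≤ V y s → |r| ≤ (V y s).toReal := by
    intro r y s hs hT h
    rw [Real.enorm_eq_ofReal_abs] at h
    exact (ENNReal.ofReal_le_iff_le_toReal (hVfin y s hs hT).ne).1 h
  have hUmono : ∀ k, ∀ y s, 0 < s → s < T → U k y s ≤ U (k + 1) y s := by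
    intro k
    induction k with
    | zero =>
      intro y s hs hT
      rw [hU0]
      exact (abs_le.1 (habs _ y s hs hT (hUb 1 y s hs hT))).1
    | succ k ih =>
      intro x t ht hT
      rw [hUs (k + 1)]
      conv_lhs => rw [hUs k]
      unfold Phi
      refine add_le_add le_rfl ?_
      apply integral_mono_ae (hnlI _ (hUm k) (hUb k) x t ht hT)
        (hnlI _ (hUm (k + 1)) (hUb (k + 1)) x t ht hT)
      have e : (volume : Measure (EuclideanSpace ℝ (Fin n))).prod (volume.restrict (Ioo 0 t)) =
          ((volume : Measure (EuclideanSpace ℝ (Fin n))).prod (volume : Measure ℝ)).restrict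
            (univ ×ˢ Ioo 0 t) := by
        rw [← Measure.prod_restrict, Measure.restrict_univ]
      rw [e]
      refine (ae_restrict_iff' (MeasurableSet.univ.prod measurableSet_Ioo)).2
        (Filter.Eventually.of_forall fun ys hys => ?_)
      have hys : 0 < ys.2 ∧ ys.2 < t := by simpa using hys
      unfold nlInt
      exact mul_le_mul_of_nonneg_left (Fnl_mono hp (ih _ _ hys.1 (hys.2.trans hT)))
        (heatKernel_nonneg n _ (by linarith [hys.2]))
  set u : EuclideanSpace ℝ (Fin n) → ℝ → ℝ := fun x t => ⨆ k, U k x t with hu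
  have hum : Measurable (fun q : EuclideanSpace ℝ (Fin n) × ℝ => u q.1 q.2) := by
    exact Measurable.iSup hUm
  have hmon : ∀ x t, 0 < t → t < T → Monotone (fun k => U k x t) := fun x t ht hT =>
    monotone_nat_of_le_succ fun k => hUmono k x t ht hT
  have hlim : ∀ x t, 0 < t → t < T → Filter.Tendsto (fun k => U k x t) Filter.atTop (nhds (u x t)) := by
    intro x t ht hT
    apply tendsto_atTop_ciSup (hmon x t ht hT)
    refine ⟨(V x t).toReal, ?_⟩
    rintro _ ⟨k, rfl⟩
    exact (abs_le.1 (habs _ x t ht hT (hUb k x t ht hT))).2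
  have hub : ∀ y s, 0 < s → s < T → ‖u y s‖ₑ ≤ V y s := by
    intro y s hs hT
    exact le_of_tendsto ((continuous_enorm.tendsto _).comp (hlim y s hs hT))
      (Filter.Eventually.of_forall fun k => hUb k y s hs hT)
  have hfix : ∀ x t, 0 < t → t < T → u x t = Phi n p φ u x t := by
    intro x t ht hT
    refine tendsto_nhds_unique ((hlim x t ht hT).comp (Filter.tendsto_add_atTop_nat 1)) ?_
    simp only [Function.comp_def, hUs]
    unfold Phi
    apply Filter.Tendsto.const_add
    have e : (volume : Measure (EuclideanSpace ℝ (Fin n))).prod (volume.restrict (Ioo 0 t)) =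
        ((volume : Measure (EuclideanSpace ℝ (Fin n))).prod (volume : Measure ℝ)).restrict
          (univ ×ˢ Ioo 0 t) := by
      rw [← Measure.prod_restrict, Measure.restrict_univ]
    apply integral_tendsto_of_tendsto_of_monotone
      (fun k => hnlI _ (hUm k) (hUb k) x t ht hT) (hnlI _ hum hub x t ht hT)
    · rw [e]
      refine (ae_restrict_iff' (MeasurableSet.univ.prod measurableSet_Ioo)).2
        (Filter.Eventually.of_forall fun ys hys => ?_)
      have hys : 0 < ys.2 ∧ ys.2 < t := by simpa using hys
      intro i j hij
      exact mul_le_mul_of_nonneg_left (Fnl_mono hp (hmon _ _ hys.1 (hys.2.trans hT) hij))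
        (heatKernel_nonneg n _ (by linarith [hys.2]))
    · rw [e]
      refine (ae_restrict_iff' (MeasurableSet.univ.prod measurableSet_Ioo)).2
        (Filter.Eventually.of_forall fun ys hys => ?_)
      have hys : 0 < ys.2 ∧ ys.2 < t := by simpa using hys
      exact (((Fnl_cont hp).tendsto _).comp (hlim _ _ hys.1 (hys.2.trans hT))).const_mul _
  refine ⟨u, hum, ?_⟩
  have e : (volume : Measure (EuclideanSpace ℝ (Fin n))).prod (volume.restrict (Ioo 0 T)) =
      ((volume : Measure (EuclideanSpace ℝ (Fin n))).prod (volume : Measure ℝ)).restrict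
        (univ ×ˢ Ioo 0 T) := by
    rw [← Measure.prod_restrict, Measure.restrict_univ]
  rw [e]
  refine (ae_restrict_iff' (MeasurableSet.univ.prod measurableSet_Ioo)).2
    (Filter.Eventually.of_forall fun q hq => ?_)
  have hq : 0 < q.2 ∧ q.2 < T := by simpa using hq
  refine ⟨hlinI _ _ hq.1 hq.2, hnlI u hum hub _ _ hq.1 hq.2, ?_⟩
  rw [hfix q.1 q.2 hq.1 hq.2, Phi, integral_prod_symm _ (hnlI u hum hub _ _ hq.1 hq.2)]
  rfl

lemma data_bound (n : ℕ) (hn : 1 ≤ n) {ε K r : ℝ} (hε : 0 < ε) (hK : 0 ≤ K)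
    (y : EuclideanSpace ℝ (Fin n))
    (h : |r| ≤ ε * ‖y‖ ^ (-(n : ℝ)) * logFac ‖y‖ ^ (-(n : ℝ) / 2 - 1) + K) :
    ‖r‖ₑ ≤ ENNReal.ofReal ε * hfun n (n / 2) y + ENNReal.ofReal (K + ε * Real.exp n + 1) := by
  have hn0 : (0 : ℝ) < n := by exact_mod_cast hn
  rw [Real.enorm_eq_ofReal_abs]
  have hen : 0 < ε * Real.exp n := by positivity
  unfold hfun
  rcases (norm_nonneg y).eq_or_lt with hy0 | hy0
  · rw [← hy0, Real.zero_rpow (by linarith)] at h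
    refine le_add_left (ENNReal.ofReal_le_ofReal ?_)
    linarith
  split_ifs with hy
  · have hl : 1 < -Real.log ‖y‖ := by
      have := (Real.log_lt_iff_lt_exp hy0).2 hy
      linarith
    have h2 : -Real.log ‖y‖ ≤ logFac ‖y‖ := by
      unfold logFac
      rw [← Real.log_inv, ← one_div]
      apply Real.log_le_log (by positivity)
      linarith [Real.exp_pos 1]
    have h3 : logFac ‖y‖ ^ (-(n : ℝ) / 2 - 1) ≤ (-Real.log ‖y‖) ^ (-1 - (n : ℝ) / 2) := by
      rw [show -(n : ℝ) / 2 - 1 = -1 - (n : ℝ) / 2 by ring]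
      exact Real.rpow_le_rpow_of_nonpos (by linarith) h2 (by linarith)
    rw [← ENNReal.ofReal_mul hε.le, ← ENNReal.ofReal_add (by positivity) (by positivity)]
    apply ENNReal.ofReal_le_ofReal
    refine h.trans ?_
    rw [mul_assoc]
    have : ‖y‖ ^ (-(n : ℝ)) * logFac ‖y‖ ^ (-(n : ℝ) / 2 - 1) ≤
        ‖y‖ ^ (-(n : ℝ)) * (-Real.log ‖y‖) ^ (-1 - (n : ℝ) / 2) := by gcongr
    have := mul_le_mul_of_nonneg_left this hε.le
    linarith
  · refine le_add_left (ENNReal.ofReal_le_ofReal (h.trans ?_))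
    push Not at hy
    have h1 : ‖y‖ ^ (-(n : ℝ)) ≤ Real.exp n := by
      calc ‖y‖ ^ (-(n : ℝ)) ≤ Real.exp (-1) ^ (-(n : ℝ)) :=
            Real.rpow_le_rpow_of_nonpos (Real.exp_pos _) hy (by linarith)
        _ = Real.exp n := by rw [← Real.exp_mul]; congr 1; ring
    have h2 : 1 ≤ logFac ‖y‖ := by
      unfold logFac
      rw [Real.le_log_iff_exp_le (by positivity)]
      have : 0 < 1 / ‖y‖ := by positivity
      linarith
    have h3 : logFac ‖y‖ ^ (-(n : ℝ) / 2 - 1) ≤ 1 :=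
      Real.rpow_le_one_of_one_le_of_nonpos h2 (by linarith)
    have h4 : ‖y‖ ^ (-(n : ℝ)) * logFac ‖y‖ ^ (-(n : ℝ) / 2 - 1) ≤ Real.exp n * 1 := by
      have : 0 ≤ logFac ‖y‖ ^ (-(n : ℝ) / 2 - 1) := Real.rpow_nonneg (by linarith) _
      gcongr
    have := mul_le_mul_of_nonneg_left h4 hε.le
    linarith

theorem stmt2 (n : ℕ) (hn : 1 ≤ n) (p : ℝ) (hp : p = 1 + 2 / n) :
    ∃ ε > (0 : ℝ), ∀ φ : EuclideanSpace ℝ (Fin n) → ℝ, Measurable φ →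
      (∃ K ≥ (0 : ℝ), ∀ᵐ x : EuclideanSpace ℝ (Fin n) ∂volume,
        |φ x| ≤ ε * ‖x‖ ^ (-(n : ℝ)) * logFac ‖x‖ ^ (-(n : ℝ) / 2 - 1) + K) →
      ∃ T > (0 : ℝ), ∃ u : EuclideanSpace ℝ (Fin n) → ℝ → ℝ, IsSolution n p T φ u := by
  have hn0 : (0 : ℝ) < n := by exact_mod_cast hn
  have hp1 : 1 ≤ p := by
    have : 0 < 2 / (n : ℝ) := by positivity
    linarith
  have hp0 : 0 ≤ p := by linarith
  obtain ⟨D, hD, hduh⟩ := Uf_duhamel n hn hp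
  set ε : ℝ := (1 / D) ^ ((n : ℝ) / 2) with hεdef
  have hε : 0 < ε := by positivity
  have hεp : D * ε ^ p = ε := by
    rw [hp, Real.rpow_add hε, Real.rpow_one, hεdef, ← Real.rpow_mul (by positivity),
      show (n : ℝ) / 2 * (2 / n) = 1 by field_simp, Real.rpow_one]
    field_simp
  refine ⟨ε, hε, fun φ hφ ⟨K, hK, hb⟩ => ?_⟩
  set k : ℝ := K + ε * Real.exp n + 1 with hk
  have hk0 : 0 < k := by positivity
  set T : ℝ := min (Real.exp (-4)) (k / (D * k ^ p)) with hT
  have hT0 : 0 < T := by positivity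
  refine ⟨T, hT0, iterate_sol n hp1 hφ (Uf n (ENNReal.ofReal ε) (ENNReal.ofReal k)) ?_ ?_ ?_⟩
  · unfold Uf vf zf
    have h1 := measurable_heatS n (measurable_hfun n (n / 2))
    have h2 := measurable_heatS n (measurable_hfun n (n / 4))
    fun_prop
  · intro x t ht htT
    have ht4 : t < Real.exp (-4) := htT.trans_le (min_le_left _ _)
    obtain ⟨C, hC, hz⟩ := zf_bound n hn
    have hzf : zf n x t < ∞ := (hz t ht ht4 x).trans_lt ENNReal.ofReal_lt_top
    obtain ⟨v2, hv, -, hv2⟩ := vf_split n hn ht ht4 x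
    have hv2f : v2 < ∞ := hv2.trans_lt ENNReal.ofReal_lt_top
    have hvf : vf n x t < ∞ := hv.trans_lt
      (ENNReal.add_lt_top.2 ⟨ENNReal.mul_lt_top ENNReal.ofReal_lt_top hzf, hv2f⟩)
    unfold Uf
    refine ENNReal.mul_lt_top (by simp) (ENNReal.add_lt_top.2 ⟨ENNReal.add_lt_top.2 ⟨?_, ?_⟩,
      ENNReal.ofReal_lt_top⟩)
    · exact ENNReal.mul_lt_top ENNReal.ofReal_lt_top hvf
    · exact ENNReal.mul_lt_top ENNReal.ofReal_lt_top hzf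
  · intro x t ht htT
    have ht4 : t < Real.exp (-4) := htT.trans_le (min_le_left _ _)
    have htk : D * (t * k ^ p) ≤ k := by
      have := htT.le.trans (min_le_right _ _)
      rw [le_div_iff₀ (by positivity)] at this
      linarith
    have hlin : heatS n t (fun y => ‖φ y‖ₑ) x ≤
        ENNReal.ofReal ε * vf n x t + ENNReal.ofReal k := by
      calc heatS n t (fun y => ‖φ y‖ₑ) x
          ≤ heatS n t (fun y => ENNReal.ofReal ε * hfun n (n / 2) y + ENNReal.ofReal k) x := by
            unfold heatS
            apply lintegral_mono_ae
            filter_upwards [hb] with y hy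
            gcongr
            exact data_bound n hn hε hK y hy
        _ = _ := by
            rw [heatS_add n ((measurable_hfun n (n / 2)).const_mul _), heatS_const n ht,
              heatS_const_mul n (measurable_hfun n (n / 2))]
            rfl
    have hD1 : ENNReal.ofReal D * ENNReal.ofReal ε ^ p = ENNReal.ofReal ε := by
      rw [ENNReal.ofReal_rpow_of_nonneg hε.le hp0, ← ENNReal.ofReal_mul hD.le, hεp]
    have hD2 : ENNReal.ofReal D * (ENNReal.ofReal t * ENNReal.ofReal k ^ p) ≤ ENNReal.ofReal k := by
      rw [ENNReal.ofReal_rpow_of_nonneg hk0.le hp0, ← ENNReal.ofReal_mul ht.le,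
        ← ENNReal.ofReal_mul hD.le]
      exact ENNReal.ofReal_le_ofReal htk
    refine (add_le_add hlin (hduh _ _ t ht ht4 x)).trans ?_
    rw [mul_add, mul_add, ← mul_assoc, ← mul_assoc (ENNReal.ofReal D) _ (vf n x t), hD1]
    unfold Uf
    set e := ENNReal.ofReal ε
    calc e * vf n x t + ENNReal.ofReal k + (e * zf n x t + e * vf n x t +
          ENNReal.ofReal D * (ENNReal.ofReal t * ENNReal.ofReal k ^ p))
        ≤ e * vf n x t + ENNReal.ofReal k + (e * zf n x t + e * vf n x t + ENNReal.ofReal k) := by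
          gcongr
      _ ≤ e * vf n x t + ENNReal.ofReal k + (e * zf n x t + e * vf n x t + ENNReal.ofReal k) +
          e * zf n x t := le_self_add
      _ = _ := by ring
end

section
/- Let n ≥ 1, 1 ≤ r ≤ q ≤ ∞, and α, β ≥ 0, and assume α ≤ β if r = q. Then there exists C > 0 such that for every T > 0, every locally integrable φ on ℝ^n with |||φ|||_{r,α;T^{1/2}} < ∞, and every t ∈ (0,T], |||S(t)φ|||_{q,β;T^{1/2}} ≤ C t^{−(n/2)(1/r − 1/q)} [log(e+1/t)]^{−α/r + β/q} |||φ|||_{r,α;T^{1/2}}, where S(t) is convolution with the Gaussian heat kernel (with the convention that for q = ∞ the norm |||·|||_{∞,β;ρ} is the L^∞ norm). -/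
open MeasureTheory Real Set ENNReal

/-- The weak Zygmund type norm `‖f‖_{𝔏^{q,∞}(log 𝔏)^α}` for an exponent
`q ∈ [1,∞]`; for `q = ∞` it is the `L^∞` norm. -/
noncomputable def zygNormE (n : ℕ) (q : ℝ≥0∞) (α : ℝ)
    (f : EuclideanSpace ℝ (Fin n) → ℝ) : ℝ≥0∞ :=
  if q = ⊤ then eLpNorm f ⊤ volume
  else
    ⨆ s : Set.Ioi (0 : ℝ),
      (ENNReal.ofReal (logFac s.1) ^ α *
        ⨆ E : {E : Set (EuclideanSpace ℝ (Fin n)) //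
            MeasurableSet E ∧ volume E = ENNReal.ofReal s.1},
          ∫⁻ x in E.1, ENNReal.ofReal (|f x| ^ q.toReal)) ^ (1 / q.toReal)

/-- The uniformly local weak Zygmund type norm `|||f|||_{q,α;ρ}`. -/
noncomputable def zygNormULE (n : ℕ) (q : ℝ≥0∞) (α ρ : ℝ)
    (f : EuclideanSpace ℝ (Fin n) → ℝ) : ℝ≥0∞ :=
  ⨆ z : EuclideanSpace ℝ (Fin n),
    zygNormE n q α ((Metric.ball z ρ).indicator f)

noncomputable def heatSg (n : ℕ) (t : ℝ) (φ : EuclideanSpace ℝ (Fin n) → ℝ)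
    (x : EuclideanSpace ℝ (Fin n)) : ℝ :=
  ∫ y, heatKernel n (x - y) t * φ y


lemma lf_one_le {s : ℝ} (hs : 0 < s) : 1 ≤ logFac s := by
  unfold logFac
  have h1 : (0:ℝ) < 1 / s := by positivity
  calc (1:ℝ) = Real.log (Real.exp 1) := by simp
    _ ≤ _ := Real.log_le_log (Real.exp_pos 1) (by linarith)

lemma lf_anti {s u : ℝ} (hs : 0 < s) (h : s ≤ u) : logFac u ≤ logFac s := by
  unfold logFac
  have hu : 0 < u := hs.trans_le h
  apply Real.log_le_log (by positivity)
  have := one_div_le_one_div_of_le hs h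
  linarith

lemma lf_scale {s l : ℝ} (hs : 0 < s) (hl : 1 ≤ l) :
    logFac s ≤ (1 + Real.log l) * logFac (l * s) := by
  have hl0 : 0 < l := by linarith
  have h1 : logFac s ≤ Real.log l + logFac (l * s) := by
    unfold logFac
    rw [← Real.log_mul (by positivity) (by positivity)]
    apply Real.log_le_log (by positivity)
    have : l * (Real.exp 1 + 1 / (l * s)) = l * Real.exp 1 + 1 / s := by field_simp
    rw [this]
    nlinarith [Real.exp_pos 1]
  have h2 := lf_one_le (mul_pos hl0 hs)
  have h3 := Real.log_nonneg hl
  nlinarith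

lemma lf_pow {p : ℝ} (hp : 0 < p) {t : ℝ} (ht : 0 < t) :
    logFac (t ^ p) ≤ (2 + p) * logFac t := by
  have h2 := lf_one_le ht
  have hu : 1 ≤ Real.exp 1 + 1 / t := by
    have : (0:ℝ) < 1 / t := by positivity
    have := Real.add_one_le_exp (1:ℝ)
    linarith
  have key : Real.exp 1 + 1 / t ^ p ≤ 2 * (Real.exp 1 + 1 / t) ^ (1 + p) := by
    have e1 : Real.exp 1 ≤ (Real.exp 1 + 1 / t) ^ (1 + p) := by
      calc Real.exp 1 ≤ Real.exp 1 + 1 / t := by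
            have : (0:ℝ) < 1 / t := by positivity
            linarith
        _ = (Real.exp 1 + 1 / t) ^ (1:ℝ) := by simp
        _ ≤ _ := Real.rpow_le_rpow_of_exponent_le hu (by linarith)
    have e2 : 1 / t ^ p ≤ (Real.exp 1 + 1 / t) ^ (1 + p) := by
      calc 1 / t ^ p = (1 / t) ^ p := by rw [Real.div_rpow (by norm_num) ht.le]; simp
        _ ≤ (Real.exp 1 + 1 / t) ^ p :=
            Real.rpow_le_rpow (by positivity) (by linarith [Real.exp_pos 1]) hp.le
        _ ≤ _ := Real.rpow_le_rpow_of_exponent_le hu (by linarith)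
    linarith
  have h3 : logFac (t ^ p) ≤ Real.log 2 + (1 + p) * logFac t := by
    unfold logFac
    rw [← Real.log_rpow (by positivity), ← Real.log_mul (by positivity) (by positivity)]
    exact Real.log_le_log (by positivity) key
  have h4 : Real.log 2 ≤ 1 := by linarith [Real.log_two_lt_d9]
  nlinarith

lemma lf_six {p c : ℝ} (hp : 0 < p) (hc : 0 < c) :
    ∃ K > (0:ℝ), ∀ t : ℝ, 0 < t → logFac t ≤ K * logFac (c * t ^ p) := by
  refine ⟨(2 + 1 / p) * (1 + Real.log (max 1 c)), ?_, ?_⟩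
  · have := Real.log_nonneg (le_max_left 1 c)
    positivity
  · intro t ht
    have hτ : 0 < t ^ p := by positivity
    have h1 := lf_pow (p := 1 / p) (by positivity) hτ
    rw [← Real.rpow_mul ht.le, mul_one_div_cancel hp.ne', Real.rpow_one] at h1
    have h2 := lf_scale hτ (le_max_left 1 c)
    have h3 : logFac (max 1 c * t ^ p) ≤ logFac (c * t ^ p) :=
      lf_anti (by positivity) (by gcongr; exact le_max_right 1 c)
    have h4 := Real.log_nonneg (le_max_left 1 c)
    calc logFac t ≤ (2 + 1 / p) * logFac (t ^ p) := h1
      _ ≤ (2 + 1 / p) * ((1 + Real.log (max 1 c)) * logFac (c * t ^ p)) := by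
          gcongr
          exact h2.trans (by gcongr)
      _ = _ := by ring

lemma lf_rpow_le {κ p : ℝ} (hκ : 0 ≤ κ) (hp : 0 < p) :
    ∃ K > (0:ℝ), ∀ u : ℝ, 1 ≤ u → (1 + Real.log u) ^ κ ≤ K * u ^ p := by
  set ε := p / (κ + 1) with hε
  have hε0 : 0 < ε := by positivity
  refine ⟨(1 + 1 / ε) ^ κ, by positivity, fun u hu => ?_⟩
  have hu0 : 0 < u := by linarith
  have h1 : Real.log u ≤ u ^ ε / ε := Real.log_le_rpow_div hu0.le hε0
  have h2 : 1 ≤ u ^ ε := Real.one_le_rpow hu hε0.le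
  have h0 := Real.log_nonneg hu
  calc (1 + Real.log u) ^ κ ≤ ((1 + 1 / ε) * u ^ ε) ^ κ := by
        apply Real.rpow_le_rpow (by positivity) _ hκ
        have : (1 + 1 / ε) * u ^ ε = u ^ ε + u ^ ε / ε := by ring
        linarith
    _ = (1 + 1 / ε) ^ κ * u ^ (ε * κ) := by
        rw [Real.mul_rpow (by positivity) (by positivity), ← Real.rpow_mul hu0.le]
    _ ≤ _ := by
        gcongr
        rw [hε, div_mul_eq_mul_div, div_le_iff₀ (by positivity)]
        nlinarith

lemma lf_three {p κ c : ℝ} (hp : 0 < p) (hκ : 0 ≤ κ) (hc : 0 < c) :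
    ∃ K > (0:ℝ), ∀ t : ℝ, 0 < t → logFac t ≤ K * logFac (c * t ^ p * logFac t ^ κ) := by
  obtain ⟨K1, hK1, h1⟩ := lf_rpow_le hκ (half_pos hp)
  obtain ⟨K2, hK2, h2⟩ := lf_six (half_pos hp) (c := c * (K1 * 4 ^ (p / 2))) (by positivity)
  refine ⟨max 2 K2, by positivity, fun t ht => ?_⟩
  have hL := lf_one_le ht
  have hL0 : 0 < logFac t := by linarith
  have hw : 0 < c * t ^ p * logFac t ^ κ := by positivity
  have hLw := lf_one_le hw
  rcases le_total 1 t with h | h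
  · have : logFac t ≤ 2 := by
      have e1 := lf_anti one_pos h
      have e2 : logFac 1 ≤ 2 := by
        unfold logFac
        rw [Real.log_le_iff_le_exp (by positivity)]
        have : Real.exp 2 = Real.exp 1 * Real.exp 1 := by rw [← Real.exp_add]; norm_num
        rw [this]
        nlinarith [Real.add_one_le_exp (1:ℝ)]
      linarith
    calc logFac t ≤ 2 * 1 := by linarith
      _ ≤ _ := by gcongr; exact le_max_left _ _
  · have hu : 1 ≤ Real.exp 1 + 1 / t := by
      have : (0:ℝ) < 1 / t := by positivity
      have := Real.add_one_le_exp (1:ℝ)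
      linarith
    have hu4 : Real.exp 1 + 1 / t ≤ 4 / t := by
      have : Real.exp 1 ≤ 3 := by linarith [Real.exp_one_lt_d9]
      rw [le_div_iff₀ ht, add_mul, one_div_mul_cancel ht.ne']
      nlinarith
    have e1 : logFac t ^ κ ≤ K1 * 4 ^ (p / 2) * t ^ (-(p / 2)) := by
      calc logFac t ^ κ ≤ (1 + Real.log (Real.exp 1 + 1 / t)) ^ κ := by
            apply Real.rpow_le_rpow hL0.le _ hκ
            unfold logFac; linarith
        _ ≤ K1 * (Real.exp 1 + 1 / t) ^ (p / 2) := h1 _ hu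
        _ ≤ K1 * (4 / t) ^ (p / 2) := by gcongr
        _ = _ := by
            rw [Real.div_rpow (by norm_num) ht.le, Real.rpow_neg ht.le]; ring
    have e2 : c * t ^ p * logFac t ^ κ ≤ c * (K1 * 4 ^ (p / 2)) * t ^ (p / 2) := by
      calc c * t ^ p * logFac t ^ κ ≤ c * t ^ p * (K1 * 4 ^ (p / 2) * t ^ (-(p / 2))) := by gcongr
        _ = c * (K1 * 4 ^ (p / 2)) * (t ^ p * t ^ (-(p / 2))) := by ring
        _ = _ := by rw [← Real.rpow_add ht]; ring_nf
    calc logFac t ≤ K2 * logFac (c * (K1 * 4 ^ (p / 2)) * t ^ (p / 2)) := h2 t ht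
      _ ≤ K2 * logFac (c * t ^ p * logFac t ^ κ) := by gcongr; exact lf_anti hw e2
      _ ≤ _ := by gcongr; exact le_max_right _ _

lemma lf_four {p β : ℝ} (hp : 0 < p) (hβ : 0 ≤ β) :
    ∃ K > (0:ℝ), ∀ s t : ℝ, 0 < s → 0 < t → s ≤ t ^ p →
      s * logFac s ^ β ≤ K * t ^ p * logFac t ^ β := by
  obtain ⟨K1, hK1, h1⟩ := lf_rpow_le hβ one_pos
  refine ⟨K1 * (2 + p) ^ β, by positivity, fun s t hs ht hst => ?_⟩
  have hL0 : 0 < logFac t := by linarith [lf_one_le ht]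
  have hLs : 0 < logFac s := by linarith [lf_one_le hs]
  have hτ : 0 < t ^ p := by positivity
  have hLτ : 0 < logFac (t ^ p) := by linarith [lf_one_le hτ]
  have hl : 1 ≤ t ^ p / s := by rwa [one_le_div hs]
  have h2 := lf_scale hs hl
  rw [div_mul_cancel₀ _ hs.ne'] at h2
  have h0 := Real.log_nonneg hl
  calc s * logFac s ^ β ≤ s * ((1 + Real.log (t ^ p / s)) * logFac (t ^ p)) ^ β := by gcongr
    _ = s * ((1 + Real.log (t ^ p / s)) ^ β * logFac (t ^ p) ^ β) := by
        rw [Real.mul_rpow (by positivity) hLτ.le]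
    _ ≤ s * ((K1 * (t ^ p / s) ^ (1:ℝ)) * ((2 + p) * logFac t) ^ β) := by
        gcongr
        · exact h1 _ hl
        · exact lf_pow hp ht
    _ = _ := by
        rw [Real.mul_rpow (by positivity) hL0.le, Real.rpow_one]
        field_simp


lemma core_small {Ω : Type*} [MeasurableSpace Ω] (μ : Measure Ω) {a α β p C1 : ℝ} (ha : 0 < a)
    (hβ : 0 ≤ β) (hp : 1 ≤ p) (hC1 : 0 < C1) :
    ∃ C > (0:ℝ), ∀ t : ℝ, 0 < t → ∀ Q : ℝ, 0 ≤ Q → ∀ F : Ω → ℝ≥0∞, ∀ B : Set Ω,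
      (∀ x, F x ≤ ENNReal.ofReal (C1 * t ^ (-a) * logFac t ^ (-α) * Q)) →
      ∀ s : ℝ, 0 < s → s ≤ t ^ a → ∀ E : Set Ω, μ E = ENNReal.ofReal s →
      ∫⁻ x in E ∩ B, F x ^ p ∂μ ≤ ENNReal.ofReal (C * (t ^ (-a * (p - 1)) *
        logFac t ^ (-α * p + β) * Q ^ p * logFac s ^ (-β))) := by
  obtain ⟨K, hK, h⟩ := lf_four ha hβ
  refine ⟨C1 ^ p * K, by positivity, fun t ht Q hQ F B hF s hs hst E hE => ?_⟩
  have hL0 : 0 < logFac t := by linarith [lf_one_le ht]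
  have hLs : 0 < logFac s := by linarith [lf_one_le hs]
  have h1 := h s t hs ht hst
  have h2 : s ≤ K * t ^ a * logFac t ^ β * logFac s ^ (-β) := by
    rw [Real.rpow_neg hLs.le, ← div_eq_mul_inv, le_div_iff₀ (by positivity)]
    exact h1
  set M := C1 * t ^ (-a) * logFac t ^ (-α) * Q with hM
  have hM0 : 0 ≤ M := by positivity
  have hMp : M ^ p = C1 ^ p * t ^ (-a * p) * logFac t ^ (-α * p) * Q ^ p := by
    rw [hM, Real.mul_rpow (by positivity) hQ, Real.mul_rpow (by positivity) (by positivity),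
      Real.mul_rpow (by positivity) (by positivity), ← Real.rpow_mul ht.le, ← Real.rpow_mul hL0.le]
  calc ∫⁻ x in E ∩ B, F x ^ p ∂μ ≤ ∫⁻ x in E, F x ^ p ∂μ :=
        lintegral_mono_set Set.inter_subset_left
    _ ≤ ∫⁻ x in E, ENNReal.ofReal (M ^ p) ∂μ := by
        apply lintegral_mono
        intro x
        dsimp only
        rw [← ENNReal.ofReal_rpow_of_nonneg hM0 (by linarith)]
        exact ENNReal.rpow_le_rpow (hF x) (by linarith)
    _ = ENNReal.ofReal (M ^ p * s) := by
        rw [setLIntegral_const, hE, ENNReal.ofReal_mul (by positivity)]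
    _ ≤ _ := by
        apply ENNReal.ofReal_le_ofReal
        calc M ^ p * s ≤ M ^ p * (K * t ^ a * logFac t ^ β * logFac s ^ (-β)) := by gcongr
          _ = C1 ^ p * K * ((t ^ (-a * p) * t ^ a) * (logFac t ^ (-α * p) * logFac t ^ β)
                * Q ^ p * logFac s ^ (-β)) := by rw [hMp]; ring
          _ = _ := by
              rw [← Real.rpow_add ht, ← Real.rpow_add hL0]
              ring_nf

lemma core_one {Ω : Type*} [MeasurableSpace Ω] (μ : Measure Ω) {a α β : ℝ} (ha : 0 < a)
    (hαβ : α ≤ β) :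
    ∃ C > (0:ℝ), ∀ t : ℝ, 0 < t → ∀ Q : ℝ, 0 ≤ Q → ∀ F : Ω → ℝ≥0∞, ∀ B : Set Ω,
      MeasurableSet B →
      (∀ E : Set Ω, MeasurableSet E → E ⊆ B → ∀ s : ℝ, 0 < s → μ E ≤ ENNReal.ofReal s →
        ∫⁻ x in E, F x ∂μ ≤ ENNReal.ofReal (logFac s ^ (-α) * Q)) →
      ∀ s : ℝ, 0 < s → t ^ a ≤ s → ∀ E : Set Ω, MeasurableSet E → μ E = ENNReal.ofReal s →
      ∫⁻ x in E ∩ B, F x ∂μ ≤ ENNReal.ofReal (C * (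
        logFac t ^ (-α + β) * Q * logFac s ^ (-β))) := by
  refine ⟨(2 + a) ^ (-α + β), by positivity, fun t ht Q hQ F B hB hF s hs hst E hEm hE => ?_⟩
  have hL0 : 0 < logFac t := by linarith [lf_one_le ht]
  have hLs : 0 < logFac s := by linarith [lf_one_le hs]
  refine (hF _ (hEm.inter hB) Set.inter_subset_right s hs
    ((measure_mono Set.inter_subset_left).trans hE.le)).trans ?_
  apply ENNReal.ofReal_le_ofReal
  have h1 : logFac s ≤ (2 + a) * logFac t := (lf_anti (by positivity) hst).trans (lf_pow ha ht)
  calc logFac s ^ (-α) * Q = logFac s ^ (-α + β) * logFac s ^ (-β) * Q := by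
        rw [← Real.rpow_add hLs]; ring_nf
    _ ≤ ((2 + a) * logFac t) ^ (-α + β) * logFac s ^ (-β) * Q := by
        gcongr
        linarith
    _ = _ := by
        rw [Real.mul_rpow (by positivity) hL0.le]; ring

lemma core_big {Ω : Type*} [MeasurableSpace Ω] (μ : Measure Ω) {a α β p C1 : ℝ} (ha : 0 < a)
    (hα : 0 ≤ α) (hβ : 0 ≤ β) (hp : 1 < p) (hC1 : 0 < C1) :
    ∃ C > (0:ℝ), ∀ t : ℝ, 0 < t → ∀ Q : ℝ, 0 ≤ Q → ∀ F : Ω → ℝ≥0∞, Measurable F → ∀ B : Set Ω,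
      MeasurableSet B →
      (∀ x, F x ≤ ENNReal.ofReal (C1 * t ^ (-a) * logFac t ^ (-α) * Q)) →
      (∀ E : Set Ω, MeasurableSet E → E ⊆ B → ∀ s : ℝ, 0 < s → μ E ≤ ENNReal.ofReal s →
        ∫⁻ x in E, F x ∂μ ≤ ENNReal.ofReal (logFac s ^ (-α) * Q)) →
      ∀ s : ℝ, 0 < s → t ^ a ≤ s → ∀ E : Set Ω, MeasurableSet E → μ E = ENNReal.ofReal s →
      ∫⁻ x in E ∩ B, F x ^ p ∂μ ≤ ENNReal.ofReal (C * (t ^ (-a * (p - 1)) *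
        logFac t ^ (-α * p + β) * Q ^ p * logFac s ^ (-β))) := by
  have hp1 : 0 < p - 1 := by linarith
  obtain ⟨K, hK, h⟩ := lf_three (p := a) (κ := α + α / (p - 1)) (c := 1 / C1) ha (by positivity)
    (by positivity)
  refine ⟨C1 ^ (p - 1) * (1 + K ^ α) * (2 + a) ^ β, by positivity,
    fun t ht Q hQ F hFm B hB hF1 hF2 s hs hst E hEm hE => ?_⟩
  have hL1 := lf_one_le ht
  have hL0 : 0 < logFac t := by linarith [lf_one_le ht]
  have hLs : 0 < logFac s := by linarith [lf_one_le hs]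
  set M := C1 * t ^ (-a) * logFac t ^ (-α) * Q with hM
  have hM0 : 0 ≤ M := by positivity
  rcases hQ.eq_or_lt with hQ0 | hQ0
  · have : ∀ x, F x = 0 := by
      intro x
      have := hF1 x
      rw [hM, ← hQ0] at this
      simpa using this
    simp [this, ENNReal.zero_rpow_of_pos (show 0 < p by linarith)]
  have hMpos : 0 < M := by positivity
  set θ := logFac t ^ (-(α / (p - 1))) with hθ
  have hθ0 : 0 < θ := by positivity
  have hθp : θ ^ (p - 1) = logFac t ^ (-α) := by
    rw [hθ, ← Real.rpow_mul hL0.le]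
    congr 1
    field_simp
  -- factor one power out
  have fact : ∀ (D : Set Ω) (R : ℝ), 0 ≤ R → MeasurableSet D →
      (∀ x ∈ D, F x ≤ ENNReal.ofReal R) →
      ∫⁻ x in D, F x ^ p ∂μ ≤ ENNReal.ofReal (R ^ (p - 1)) * ∫⁻ x in D, F x ∂μ := by
    intro D R hR hD hle
    rw [← lintegral_const_mul _ hFm]
    apply setLIntegral_mono' hD
    intro x hx
    calc F x ^ p = F x ^ ((p - 1) + 1) := by ring_nf
      _ = F x ^ (p - 1) * F x := by
          rw [ENNReal.rpow_add_of_nonneg _ _ hp1.le zero_le_one, ENNReal.rpow_one]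
      _ ≤ _ := by
          gcongr
          rw [← ENNReal.ofReal_rpow_of_nonneg hR hp1.le]
          exact ENNReal.rpow_le_rpow (hle x hx) hp1.le
  have hEB : MeasurableSet (E ∩ B) := hEm.inter hB
  have tot : ∀ D : Set Ω, MeasurableSet D → D ⊆ E ∩ B → ∫⁻ x in D, F x ∂μ ≤ ENNReal.ofReal Q := by
    intro D hD hDE
    refine (hF2 D hD (hDE.trans Set.inter_subset_right) s hs
      ((measure_mono (hDE.trans Set.inter_subset_left)).trans hE.le)).trans ?_
    apply ENNReal.ofReal_le_ofReal
    have : logFac s ^ (-α) ≤ 1 := Real.rpow_le_one_of_one_le_of_nonpos (lf_one_le hs) (by linarith)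
    nlinarith
  set S := {x | ENNReal.ofReal (θ * M) ≤ F x} with hS
  have hSm : MeasurableSet S := measurableSet_le measurable_const hFm
  have hD : MeasurableSet ((E ∩ B) ∩ S) := hEB.inter hSm
  have hA : MeasurableSet ((E ∩ B) \ S) := hEB.diff hSm
  -- low part
  have low : ∫⁻ x in (E ∩ B) \ S, F x ^ p ∂μ ≤ ENNReal.ofReal (M ^ (p - 1) * logFac t ^ (-α) * Q) := by
    refine (fact _ (θ * M) (by positivity) hA ?_).trans ?_
    · intro x hx
      have := hx.2
      simp only [hS, Set.mem_ofPred_eq, not_le] at this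
      exact this.le
    · rw [Real.mul_rpow hθ0.le hM0, hθp, mul_comm (logFac t ^ (-α)),
        ENNReal.ofReal_mul (p := M ^ (p - 1) * logFac t ^ (-α)) (by positivity)]
      gcongr
      exact tot _ hA Set.sdiff_subset
  -- measure of the high part
  have hmeas : μ ((E ∩ B) ∩ S) ≤ ENNReal.ofReal (Q / (θ * M)) := by
    rw [ENNReal.ofReal_div_of_pos (by positivity), ENNReal.le_div_iff_mul_le
      (Or.inl (by simp; positivity)) (Or.inl ENNReal.ofReal_ne_top)]
    refine le_trans ?_ (tot _ hD Set.inter_subset_left)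
    rw [mul_comm, ← setLIntegral_const]
    exact setLIntegral_mono' hD (fun x hx => hx.2)
  have heq : Q / (θ * M) = 1 / C1 * t ^ a * logFac t ^ (α + α / (p - 1)) := by
    rw [hθ, hM, Real.rpow_neg hL0.le, Real.rpow_neg hL0.le, Real.rpow_neg ht.le, Real.rpow_add hL0]
    field_simp
  rw [heq] at hmeas
  set w := 1 / C1 * t ^ a * logFac t ^ (α + α / (p - 1)) with hw
  have hw0 : 0 < w := by positivity
  have hLw : 0 < logFac w := by linarith [lf_one_le hw0]
  have high : ∫⁻ x in (E ∩ B) ∩ S, F x ^ p ∂μ ≤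
      ENNReal.ofReal (M ^ (p - 1) * K ^ α * logFac t ^ (-α) * Q) := by
    refine (fact _ M hM0 hD (fun x _ => hF1 x)).trans ?_
    rw [mul_assoc, mul_assoc, ENNReal.ofReal_mul (by positivity)]
    gcongr
    refine (hF2 _ hD (Set.inter_subset_left.trans Set.inter_subset_right) w hw0 hmeas).trans ?_
    apply ENNReal.ofReal_le_ofReal
    rw [← mul_assoc]
    gcongr
    rw [Real.rpow_neg hLw.le, Real.rpow_neg hL0.le, ← div_eq_mul_inv, le_div_iff₀ (by positivity),
      inv_mul_le_iff₀ (by positivity), mul_comm, ← Real.mul_rpow hK.le hLw.le]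
    exact Real.rpow_le_rpow hL0.le (h t ht) hα
  have h1 : logFac s ≤ (2 + a) * logFac t := (lf_anti (by positivity) hst).trans (lf_pow ha ht)
  have h2 : 1 ≤ (2 + a) ^ β * logFac t ^ β * logFac s ^ (-β) := by
    rw [Real.rpow_neg hLs.le, ← div_eq_mul_inv, one_le_div (by positivity),
      ← Real.mul_rpow (by positivity) hL0.le]
    exact Real.rpow_le_rpow hLs.le h1 hβ
  have hMp : M ^ (p - 1) = C1 ^ (p - 1) * t ^ (-a * (p - 1)) * logFac t ^ (-α * (p - 1)) *
      Q ^ (p - 1) := by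
    rw [hM, Real.mul_rpow (by positivity) hQ, Real.mul_rpow (by positivity) (by positivity),
      Real.mul_rpow (by positivity) (by positivity), ← Real.rpow_mul ht.le, ← Real.rpow_mul hL0.le]
  rw [← lintegral_inter_add_sdiff _ (E ∩ B) hSm]
  refine (add_le_add high low).trans ?_
  rw [← ENNReal.ofReal_add (by positivity) (by positivity)]
  apply ENNReal.ofReal_le_ofReal
  have e1 : Q ^ p = Q ^ (p - 1) * Q := by
    rw [← Real.rpow_add_one hQ0.ne']; ring_nf
  have e2 : logFac t ^ (-α * p + β) = logFac t ^ (-α * (p - 1)) * logFac t ^ (-α) * logFac t ^ β := by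
    rw [← Real.rpow_add hL0, ← Real.rpow_add hL0]; ring_nf
  have e3 : 0 ≤ M ^ (p - 1) * (1 + K ^ α) * logFac t ^ (-α) * Q := by positivity
  calc M ^ (p - 1) * K ^ α * logFac t ^ (-α) * Q + M ^ (p - 1) * logFac t ^ (-α) * Q
      = M ^ (p - 1) * (1 + K ^ α) * logFac t ^ (-α) * Q * 1 := by ring
    _ ≤ M ^ (p - 1) * (1 + K ^ α) * logFac t ^ (-α) * Q *
        ((2 + a) ^ β * logFac t ^ β * logFac s ^ (-β)) := by gcongr
    _ = _ := by rw [hMp, e1, e2]; ring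

lemma core {Ω : Type*} [MeasurableSpace Ω] (μ : Measure Ω) {a α β p C1 : ℝ} (ha : 0 < a)
    (hα : 0 ≤ α) (hβ : 0 ≤ β) (hp : 1 ≤ p) (hcrit : p = 1 → α ≤ β) (hC1 : 0 < C1) :
    ∃ C > (0:ℝ), ∀ t : ℝ, 0 < t → ∀ Q : ℝ, 0 ≤ Q → ∀ F : Ω → ℝ≥0∞, Measurable F → ∀ B : Set Ω,
      MeasurableSet B →
      (∀ x, F x ≤ ENNReal.ofReal (C1 * t ^ (-a) * logFac t ^ (-α) * Q)) →
      (∀ E : Set Ω, MeasurableSet E → E ⊆ B → ∀ s : ℝ, 0 < s → μ E ≤ ENNReal.ofReal s →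
        ∫⁻ x in E, F x ∂μ ≤ ENNReal.ofReal (logFac s ^ (-α) * Q)) →
      ∀ s : ℝ, 0 < s → ∀ E : Set Ω, MeasurableSet E → μ E = ENNReal.ofReal s →
      ∫⁻ x in E ∩ B, F x ^ p ∂μ ≤ ENNReal.ofReal (C * (t ^ (-a * (p - 1)) *
        logFac t ^ (-α * p + β) * Q ^ p * logFac s ^ (-β))) := by
  obtain ⟨K1, hK1, h1⟩ := core_small (α := α) μ ha hβ hp hC1
  have big : ∃ C > (0:ℝ), ∀ t : ℝ, 0 < t → ∀ Q : ℝ, 0 ≤ Q → ∀ F : Ω → ℝ≥0∞, Measurable F →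
      ∀ B : Set Ω, MeasurableSet B →
      (∀ x, F x ≤ ENNReal.ofReal (C1 * t ^ (-a) * logFac t ^ (-α) * Q)) →
      (∀ E : Set Ω, MeasurableSet E → E ⊆ B → ∀ s : ℝ, 0 < s → μ E ≤ ENNReal.ofReal s →
        ∫⁻ x in E, F x ∂μ ≤ ENNReal.ofReal (logFac s ^ (-α) * Q)) →
      ∀ s : ℝ, 0 < s → t ^ a ≤ s → ∀ E : Set Ω, MeasurableSet E → μ E = ENNReal.ofReal s →
      ∫⁻ x in E ∩ B, F x ^ p ∂μ ≤ ENNReal.ofReal (C * (t ^ (-a * (p - 1)) *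
        logFac t ^ (-α * p + β) * Q ^ p * logFac s ^ (-β))) := by
    rcases hp.eq_or_lt with h | h
    · obtain ⟨C, hC, h2⟩ := core_one μ ha (hcrit h.symm)
      refine ⟨C, hC, fun t ht Q hQ F hFm B hB hF1 hF2 s hs hst E hEm hE => ?_⟩
      have := h2 t ht Q hQ F B hB hF2 s hs hst E hEm hE
      rw [← h]
      simpa using this
    · exact core_big μ ha hα hβ h hC1
  obtain ⟨K2, hK2, h2⟩ := big
  refine ⟨max K1 K2, by positivity, fun t ht Q hQ F hFm B hB hF1 hF2 s hs E hEm hE => ?_⟩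
  have hL0 : 0 < logFac t := by linarith [lf_one_le ht]
  have hLs : 0 < logFac s := by linarith [lf_one_le hs]
  rcases le_total s (t ^ a) with h | h
  · refine (h1 t ht Q hQ F B hF1 s hs h E hE).trans (ENNReal.ofReal_le_ofReal ?_)
    gcongr
    exact le_max_left _ _
  · refine (h2 t ht Q hQ F hFm B hB hF1 hF2 s hs h E hEm hE).trans (ENNReal.ofReal_le_ofReal ?_)
    gcongr
    exact le_max_right _ _


lemma hk_nonneg (n : ℕ) {t : ℝ} (ht : 0 < t) (x : EuclideanSpace ℝ (Fin n)) :
    0 ≤ heatKernel n x t := by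
  unfold heatKernel; positivity

lemma hk_cont (n : ℕ) (t : ℝ) : Continuous fun x => heatKernel n x t := by
  unfold heatKernel; fun_prop

lemma hk_lint (n : ℕ) {t : ℝ} (ht : 0 < t) :
    ∫⁻ x, ENNReal.ofReal (heatKernel n x t) = 1 := by
  have h1 : ∫ x, heatKernel n x t = 1 := by
    unfold heatKernel
    rw [integral_const_mul]
    have := GaussianFourier.integral_rexp_neg_mul_sq_norm (V := EuclideanSpace ℝ (Fin n))
      (b := 1 / (4 * t)) (by positivity)
    have e : (fun x : EuclideanSpace ℝ (Fin n) => Real.exp (-‖x‖ ^ 2 / (4 * t))) =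
        fun x => Real.exp (-(1 / (4 * t)) * ‖x‖ ^ 2) := by
      ext x; congr 1; ring
    rw [e, this, finrank_euclideanSpace_fin]
    have e2 : π / (1 / (4 * t)) = 4 * π * t := by field_simp
    rw [e2, ← Real.rpow_add (by positivity)]
    simp [neg_div]
  have hi : Integrable (fun x => heatKernel n x t) volume :=
    .of_integral_ne_zero (by rw [h1]; exact one_ne_zero)
  rw [← ofReal_integral_eq_lintegral_ofReal hi (Filter.Eventually.of_forall (hk_nonneg n ht)), h1]
  simp

lemma hk_lint_sub (n : ℕ) {t : ℝ} (ht : 0 < t) (x : EuclideanSpace ℝ (Fin n)) :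
    ∫⁻ y, ENNReal.ofReal (heatKernel n (x - y) t) = 1 := by
  rw [lintegral_sub_left_eq_self (fun y => ENNReal.ofReal (heatKernel n y t)) x]
  exact hk_lint n ht

lemma hk_meas (n : ℕ) (t : ℝ) : Measurable fun x => ENNReal.ofReal (heatKernel n x t) :=
  (hk_cont n t).measurable.ennreal_ofReal

lemma hk_jensen (n : ℕ) {t : ℝ} (ht : 0 < t) {r : ℝ} (hr : 1 ≤ r)
    (φ : EuclideanSpace ℝ (Fin n) → ℝ) (hφ : AEStronglyMeasurable φ volume)
    (x : EuclideanSpace ℝ (Fin n)) :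
    ‖heatSg n t φ x‖ₑ ^ r ≤
      ∫⁻ y, ENNReal.ofReal (heatKernel n (x - y) t) * ENNReal.ofReal (|φ y| ^ r) := by
  have hKm : Measurable fun y => ENNReal.ofReal (heatKernel n (x - y) t) :=
    (hk_meas n t).comp (measurable_const.sub measurable_id)
  set μ : Measure (EuclideanSpace ℝ (Fin n)) :=
    volume.withDensity (fun y => ENNReal.ofReal (heatKernel n (x - y) t)) with hμ
  have hprob : IsProbabilityMeasure μ := ⟨by
    rw [hμ, withDensity_apply _ MeasurableSet.univ, Measure.restrict_univ, hk_lint_sub n ht]⟩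
  have hφμ : AEStronglyMeasurable φ μ := hφ.mono_ac (withDensity_absolutelyContinuous _ _)
  have h1 : ‖heatSg n t φ x‖ₑ ≤ ∫⁻ y, ‖φ y‖ₑ ∂μ := by
    unfold heatSg
    refine (enorm_integral_le_lintegral_enorm _).trans ?_
    rw [hμ, lintegral_withDensity_eq_lintegral_mul₀ hKm.aemeasurable hφ.enorm]
    apply le_of_eq
    congr 1
    ext y
    rw [enorm_mul, Real.enorm_of_nonneg (hk_nonneg n ht _)]
    rfl
  have h2 : (∫⁻ y, ‖φ y‖ₑ ∂μ) ^ r ≤ ∫⁻ y, ‖φ y‖ₑ ^ r ∂μ := by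
    have := eLpNorm_le_eLpNorm_of_exponent_le (p := 1) (q := ENNReal.ofReal r)
      (ENNReal.one_le_ofReal.mpr hr) hφμ
    rw [eLpNorm_one_eq_lintegral_enorm, eLpNorm_eq_lintegral_rpow_enorm_toReal
      (by simp; linarith) ENNReal.ofReal_ne_top, ENNReal.toReal_ofReal (by linarith)] at this
    rw [one_div, ENNReal.le_rpow_inv_iff (by linarith)] at this
    exact this
  refine (ENNReal.rpow_le_rpow h1 (by linarith)).trans (h2.trans (le_of_eq ?_))
  rw [hμ, lintegral_withDensity_eq_lintegral_mul₀ hKm.aemeasurable (hφ.enorm.pow_const r)]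
  congr 1
  ext y
  simp only [Pi.mul_apply]
  rw [← ENNReal.ofReal_rpow_of_nonneg (abs_nonneg _) (by linarith), Real.enorm_eq_ofReal_abs]

lemma hk_compare (n : ℕ) {t : ℝ} (ht : 0 < t) (x y z : EuclideanSpace ℝ (Fin n))
    (h : ‖y - z‖ ^ 2 ≤ t) :
    heatKernel n (x - y) t ≤ (2 ^ ((n:ℝ) / 2) * Real.exp (1 / 4)) * heatKernel n (x - z) (2 * t) := by
  unfold heatKernel
  have e1 : (4 * π * (2 * t)) ^ (-(n:ℝ) / 2) = 2 ^ (-((n:ℝ) / 2)) * (4 * π * t) ^ (-(n:ℝ) / 2) := by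
    rw [show 4 * π * (2 * t) = 2 * (4 * π * t) by ring, Real.mul_rpow (by norm_num) (by positivity),
      neg_div]
  have e2 : (2:ℝ) ^ ((n:ℝ) / 2) * 2 ^ (-((n:ℝ) / 2)) = 1 := by
    rw [← Real.rpow_add (by norm_num)]; simp
  have e3 : Real.exp (-‖x - y‖ ^ 2 / (4 * t)) ≤
      Real.exp (1 / 4) * Real.exp (-‖x - z‖ ^ 2 / (4 * (2 * t))) := by
    rw [← Real.exp_add]
    apply Real.exp_le_exp.mpr
    have h3 : ‖x - z‖ ≤ ‖x - y‖ + ‖y - z‖ := by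
      have : x - z = (x - y) + (y - z) := by abel
      rw [this]; exact norm_add_le _ _
    have h4 : ‖x - z‖ ^ 2 ≤ 2 * ‖x - y‖ ^ 2 + 2 * t := by
      nlinarith [sq_nonneg (‖x - y‖ - ‖y - z‖), norm_nonneg (x - z), norm_nonneg (x - y),
        norm_nonneg (y - z)]
    rw [show (1:ℝ) / 4 + -‖x - z‖ ^ 2 / (4 * (2 * t)) = (2 * t - ‖x - z‖ ^ 2) / (8 * t) by
      field_simp; ring, show -‖x - y‖ ^ 2 / (4 * t) = (-(2 * ‖x - y‖ ^ 2)) / (8 * t) by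
      field_simp; ring]
    gcongr
    linarith
  calc (4 * π * t) ^ (-(n:ℝ) / 2) * Real.exp (-‖x - y‖ ^ 2 / (4 * t))
      ≤ (4 * π * t) ^ (-(n:ℝ) / 2) *
        (Real.exp (1 / 4) * Real.exp (-‖x - z‖ ^ 2 / (4 * (2 * t)))) := by gcongr
    _ = (2 ^ ((n:ℝ) / 2) * 2 ^ (-((n:ℝ) / 2))) * ((4 * π * t) ^ (-(n:ℝ) / 2) *
        (Real.exp (1 / 4) * Real.exp (-‖x - z‖ ^ 2 / (4 * (2 * t))))) := by rw [e2, one_mul]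
    _ = _ := by rw [e1]; ring

lemma hk_ind (n : ℕ) (ρ : ℝ) (h : EuclideanSpace ℝ (Fin n) → ℝ≥0∞) :
    ∃ I : EuclideanSpace ℝ (Fin n) → EuclideanSpace ℝ (Fin n) → ℝ≥0∞,
      Measurable (Function.uncurry I) ∧
      (∀ y, ∫⁻ z, I y z = volume (Metric.ball y ρ)) ∧
      (∀ z, ∫⁻ y, I y z * h y = ∫⁻ y in Metric.ball z ρ, h y) ∧
      (∀ y z, ¬ dist y z < ρ → I y z = 0) := by
  have hSm : MeasurableSet {p : EuclideanSpace ℝ (Fin n) × EuclideanSpace ℝ (Fin n) |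
      dist p.1 p.2 < ρ} := measurableSet_lt measurable_dist measurable_const
  refine ⟨fun y z => Set.indicator {p : EuclideanSpace ℝ (Fin n) × EuclideanSpace ℝ (Fin n) |
      dist p.1 p.2 < ρ} (fun _ => (1:ℝ≥0∞)) (y, z), ?_, ?_, ?_, ?_⟩
  · exact measurable_const.indicator hSm
  · intro y
    have : (fun z => Set.indicator {p : EuclideanSpace ℝ (Fin n) × EuclideanSpace ℝ (Fin n) |
      dist p.1 p.2 < ρ} (fun _ => (1:ℝ≥0∞)) (y, z)) =
        (Metric.ball y ρ).indicator (fun _ => (1:ℝ≥0∞)) := by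
      ext z
      simp only [Set.indicator, Metric.mem_ball, Set.mem_ofPred_eq, dist_comm y z]
    rw [this, lintegral_indicator measurableSet_ball]
    simp
  · intro z
    have : (fun y => Set.indicator {p : EuclideanSpace ℝ (Fin n) × EuclideanSpace ℝ (Fin n) |
      dist p.1 p.2 < ρ} (fun _ => (1:ℝ≥0∞)) (y, z) * h y) = (Metric.ball z ρ).indicator h := by
      ext y
      simp only [Set.indicator, Metric.mem_ball, Set.mem_ofPred_eq]
      split_ifs <;> simp
    rw [this, lintegral_indicator measurableSet_ball]
  · intro y z hd
    simp [hd]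

lemma hk_sup (n : ℕ) {t : ℝ} (ht : 0 < t) (h : EuclideanSpace ℝ (Fin n) → ℝ≥0∞)
    (hm : Measurable h) (A V : ℝ≥0∞)
    (hA : ∀ z, ∫⁻ y in Metric.ball z (t ^ ((1:ℝ) / 2)), h y ≤ A)
    (hV : ∀ z : EuclideanSpace ℝ (Fin n), volume (Metric.ball z (t ^ ((1:ℝ) / 2))) = V)
    (x : EuclideanSpace ℝ (Fin n)) :
    V * ∫⁻ y, ENNReal.ofReal (heatKernel n (x - y) t) * h y ≤
      ENNReal.ofReal (2 ^ ((n:ℝ) / 2) * Real.exp (1 / 4)) * A := by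
  set ρ := t ^ ((1:ℝ) / 2) with hρ
  set c := 2 ^ ((n:ℝ) / 2) * Real.exp (1 / 4) with hc
  have hc0 : 0 < c := by positivity
  have hKm : Measurable fun y => ENNReal.ofReal (heatKernel n (x - y) t) :=
    (hk_meas n t).comp (measurable_const.sub measurable_id)
  have hKm2 : Measurable fun y => ENNReal.ofReal (heatKernel n (x - y) (2 * t)) :=
    (hk_meas n (2 * t)).comp (measurable_const.sub measurable_id)
  obtain ⟨I, hIm, hIy, hIz, hI0⟩ := hk_ind n ρ h
  replace hIy : ∀ y, ∫⁻ z, I y z = V := fun y => (hIy y).trans (hV y)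
  replace hIz : ∀ z, ∫⁻ y, I y z * h y ≤ A := fun z => (hIz z).le.trans (hA z)
  calc V * ∫⁻ y, ENNReal.ofReal (heatKernel n (x - y) t) * h y
      = ∫⁻ y, ∫⁻ z, I y z * (ENNReal.ofReal (heatKernel n (x - y) t) * h y) := by
        have hh : Measurable fun y => ENNReal.ofReal (heatKernel n (x - y) t) * h y := hKm.mul hm
        rw [← lintegral_const_mul _ hh]
        congr 1
        ext y
        have hh2 : Measurable fun z => I y z := hIm.comp measurable_prodMk_left
        rw [lintegral_mul_const _ hh2, hIy]
    _ ≤ ∫⁻ y, ∫⁻ z, I y z * (ENNReal.ofReal (c * heatKernel n (x - z) (2 * t)) * h y) := by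
        apply lintegral_mono; intro y
        apply lintegral_mono; intro z
        dsimp only
        by_cases hd : dist y z < ρ
        · gcongr
          apply hk_compare n ht
          rw [← dist_eq_norm]
          have : ρ ^ 2 = t := by
            rw [hρ, ← Real.sqrt_eq_rpow, Real.sq_sqrt ht.le]
          rw [← this]
          gcongr
        · have : I y z = 0 := hI0 y z hd
          simp [this]
    _ = ∫⁻ z, ∫⁻ y, I y z * (ENNReal.ofReal (c * heatKernel n (x - z) (2 * t)) * h y) := by
        apply lintegral_lintegral_swap
        apply Measurable.aemeasurable
        refine hIm.mul (Measurable.mul ?_ (hm.comp measurable_fst))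
        exact ((((hk_cont n (2 * t)).measurable.comp
          (measurable_const.sub measurable_snd)).const_mul c)).ennreal_ofReal
    _ = ∫⁻ z, ENNReal.ofReal (c * heatKernel n (x - z) (2 * t)) * ∫⁻ y, I y z * h y := by
        congr 1
        ext z
        have hh : Measurable fun y => I y z * h y := (hIm.comp measurable_prodMk_right).mul hm
        rw [← lintegral_const_mul _ hh]
        congr 1
        ext y
        ring
    _ ≤ ∫⁻ z, ENNReal.ofReal c * A * ENNReal.ofReal (heatKernel n (x - z) (2 * t)) := by
        apply lintegral_mono; intro z
        dsimp only
        rw [ENNReal.ofReal_mul hc0.le, mul_right_comm]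
        exact mul_le_mul_left (mul_le_mul_right (hIz z) _) _
    _ = _ := by
        rw [lintegral_const_mul _ hKm2, hk_lint_sub n (by positivity), mul_one]

lemma hk_set (n : ℕ) {t : ℝ} (ht : 0 < t) (h : EuclideanSpace ℝ (Fin n) → ℝ≥0∞)
    (hm : Measurable h) (A : ℝ≥0∞) (E : Set (EuclideanSpace ℝ (Fin n))) (hE : MeasurableSet E)
    (hA : ∀ y : EuclideanSpace ℝ (Fin n), ∫⁻ w in (fun w => w + y) ⁻¹' E, h w ≤ A) :
    ∫⁻ x in E, ∫⁻ y, ENNReal.ofReal (heatKernel n (x - y) t) * h y ≤ A := by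
  calc ∫⁻ x in E, ∫⁻ y, ENNReal.ofReal (heatKernel n (x - y) t) * h y
      = ∫⁻ x in E, ∫⁻ y, ENNReal.ofReal (heatKernel n y t) * h (x - y) := by
        congr 1
        ext x
        rw [← lintegral_sub_left_eq_self
          (fun y => ENNReal.ofReal (heatKernel n y t) * h (x - y)) x]
        simp
    _ = ∫⁻ y, ∫⁻ x in E, ENNReal.ofReal (heatKernel n y t) * h (x - y) := by
        apply lintegral_lintegral_swap
        apply Measurable.aemeasurable
        exact ((hk_meas n t).comp measurable_snd).mul
          (hm.comp (measurable_fst.sub measurable_snd))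
    _ ≤ ∫⁻ y, ENNReal.ofReal (heatKernel n y t) * A := by
        apply lintegral_mono; intro y
        dsimp only
        have hh : Measurable fun x => h (x - y) := hm.comp (measurable_id.sub_const y)
        rw [lintegral_const_mul _ hh]
        gcongr
        refine le_trans (le_of_eq ?_) (hA y)
        rw [← lintegral_indicator hE, ← lintegral_indicator (hE.preimage (measurable_add_const y)),
          ← lintegral_sub_right_eq_self (((fun w => w + y) ⁻¹' E).indicator h) y]
        congr 1
        ext x
        have hx : (x - y ∈ (fun w => w + y) ⁻¹' E) ↔ x ∈ E := by
          rw [Set.mem_preimage, sub_add_cancel]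
        by_cases hxE : x ∈ E
        · rw [Set.indicator_of_mem hxE, Set.indicator_of_mem (hx.mpr hxE)]
        · rw [Set.indicator_of_notMem hxE, Set.indicator_of_notMem (fun h' => hxE (hx.mp h'))]
    _ = A := by
        rw [lintegral_mul_const _ (hk_meas n t), hk_lint n ht, one_mul]


lemma zyg_local (n : ℕ) {r : ℝ≥0∞} (hr : 1 ≤ r) (hr' : r ≠ ⊤) {α ρ : ℝ}
    (φ : EuclideanSpace ℝ (Fin n) → ℝ) (z : EuclideanSpace ℝ (Fin n))
    (E : Set (EuclideanSpace ℝ (Fin n))) (hE : MeasurableSet E) (hEB : E ⊆ Metric.ball z ρ)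
    {s : ℝ} (hs : 0 < s) (hEs : volume E = ENNReal.ofReal s) :
    ∫⁻ x in E, ENNReal.ofReal (|φ x| ^ r.toReal) ≤
      ENNReal.ofReal (logFac s ^ (-α)) * zygNormULE n r α ρ φ ^ r.toReal := by
  have hr0 : 0 < r.toReal := ENNReal.toReal_pos (by positivity) hr'
  have hLs : 0 < logFac s := by linarith [lf_one_le hs]
  have h1 : (ENNReal.ofReal (logFac s) ^ α *
      ∫⁻ x in E, ENNReal.ofReal (|φ x| ^ r.toReal)) ^ (1 / r.toReal) ≤ zygNormULE n r α ρ φ := by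
    unfold zygNormULE
    refine le_trans ?_ (le_iSup _ z)
    unfold zygNormE
    rw [if_neg hr']
    refine le_trans ?_ (le_iSup _ (⟨s, hs⟩ : Set.Ioi (0:ℝ)))
    refine ENNReal.rpow_le_rpow ?_ (by positivity)
    refine mul_le_mul_right ?_ _
    refine le_trans ?_ (le_iSup _ (⟨E, hE, hEs⟩ : {E : Set (EuclideanSpace ℝ (Fin n)) //
            MeasurableSet E ∧ volume E = ENNReal.ofReal s}))
    apply setLIntegral_mono' hE
    intro x hx
    rw [Set.indicator_of_mem (hEB hx)]
  rw [one_div, ENNReal.rpow_inv_le_iff hr0] at h1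
  rw [ENNReal.ofReal_rpow_of_pos hLs] at h1
  calc _ = ENNReal.ofReal (logFac s ^ (-α)) * (ENNReal.ofReal (logFac s ^ α) *
        ∫⁻ x in E, ENNReal.ofReal (|φ x| ^ r.toReal)) := by
        rw [← mul_assoc, ← ENNReal.ofReal_mul (by positivity), ← Real.rpow_add hLs]
        simp
    _ ≤ _ := by gcongr

lemma zyg_local' (n : ℕ) {r : ℝ≥0∞} (hr : 1 ≤ r) (hr' : r ≠ ⊤) {α ρ : ℝ} (hα : 0 ≤ α)
    (φ : EuclideanSpace ℝ (Fin n) → ℝ) (z : EuclideanSpace ℝ (Fin n))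
    (E : Set (EuclideanSpace ℝ (Fin n))) (hE : MeasurableSet E) (hEB : E ⊆ Metric.ball z ρ)
    {s : ℝ} (hs : 0 < s) (hEs : volume E ≤ ENNReal.ofReal s) :
    ∫⁻ x in E, ENNReal.ofReal (|φ x| ^ r.toReal) ≤
      ENNReal.ofReal (logFac s ^ (-α)) * zygNormULE n r α ρ φ ^ r.toReal := by
  rcases eq_or_ne (volume E) 0 with h0 | h0
  · rw [setLIntegral_measure_zero _ _ h0]; exact zero_le
  have hfin : volume E ≠ ⊤ := ne_top_of_le_ne_top ENNReal.ofReal_ne_top hEs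
  have hpos : 0 < (volume E).toReal := ENNReal.toReal_pos h0 hfin
  refine (zyg_local (α := α) n hr hr' φ z E hE hEB hpos (ENNReal.ofReal_toReal hfin).symm).trans ?_
  refine mul_le_mul_left (ENNReal.ofReal_le_ofReal ?_) _
  have hle : (volume E).toReal ≤ s := ENNReal.toReal_le_of_le_ofReal hs.le hEs
  have hLs : 0 < logFac s := by linarith [lf_one_le hs]
  exact Real.rpow_le_rpow_of_nonpos hLs (lf_anti hpos hle) (by linarith)

lemma main_F (n : ℕ) (hn : 1 ≤ n) {r : ℝ≥0∞} (hr : 1 ≤ r) (hr' : r ≠ ⊤) {α : ℝ} (hα : 0 ≤ α) :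
    ∃ C1 > (0:ℝ), ∀ T : ℝ, 0 < T →
      ∀ φ : EuclideanSpace ℝ (Fin n) → ℝ, LocallyIntegrable φ volume →
        zygNormULE n r α (T ^ ((1 : ℝ) / 2)) φ < ⊤ →
        ∀ t : ℝ, 0 < t → t ≤ T → ∃ F : EuclideanSpace ℝ (Fin n) → ℝ≥0∞, Measurable F ∧
          (∀ x, ‖heatSg n t φ x‖ₑ ^ r.toReal ≤ F x) ∧
          (∀ x, F x ≤ ENNReal.ofReal (C1 * t ^ (-((n:ℝ) / 2)) * logFac t ^ (-α) *
            (zygNormULE n r α (T ^ ((1 : ℝ) / 2)) φ).toReal ^ r.toReal)) ∧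
          ∀ z : EuclideanSpace ℝ (Fin n), ∀ E : Set (EuclideanSpace ℝ (Fin n)), MeasurableSet E →
            E ⊆ Metric.ball z (T ^ ((1 : ℝ) / 2)) → ∀ s : ℝ, 0 < s →
            volume E ≤ ENNReal.ofReal s →
            ∫⁻ x in E, F x ≤ ENNReal.ofReal (logFac s ^ (-α) *
              (zygNormULE n r α (T ^ ((1 : ℝ) / 2)) φ).toReal ^ r.toReal) := by
  have ha : 0 < (n:ℝ) / 2 := by positivity
  have hr1 : 1 ≤ r.toReal := by
    have := ENNReal.toReal_mono hr' hr
    simpa using this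
  have : Nonempty (Fin n) := ⟨⟨0, hn⟩⟩
  set v : ℝ := (volume (Metric.ball (0 : EuclideanSpace ℝ (Fin n)) 1)).toReal with hv
  have hvtop : volume (Metric.ball (0 : EuclideanSpace ℝ (Fin n)) 1) ≠ ⊤ :=
    measure_ball_lt_top.ne
  have hv0 : 0 < v := ENNReal.toReal_pos (Metric.measure_ball_pos _ _ one_pos).ne' hvtop
  obtain ⟨K, hK, hKL⟩ := lf_six ha hv0
  set c : ℝ := 2 ^ ((n:ℝ) / 2) * Real.exp (1 / 4) with hc
  have hc0 : 0 < c := by positivity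
  refine ⟨c * K ^ α / v, by positivity, fun T hT φ hφ hN t ht htT => ?_⟩
  set N := zygNormULE n r α (T ^ ((1 : ℝ) / 2)) φ with hNdef
  set Q := N.toReal ^ r.toReal with hQ
  have hQ0 : 0 ≤ Q := by positivity
  have hNQ : N ^ r.toReal = ENNReal.ofReal Q := by
    rw [hQ, ← ENNReal.ofReal_rpow_of_nonneg ENNReal.toReal_nonneg (by linarith),
      ENNReal.ofReal_toReal hN.ne]
  have hL0 : 0 < logFac t := by linarith [lf_one_le ht]
  have hφm : AEStronglyMeasurable φ volume := hφ.aestronglyMeasurable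
  have hgm : AEMeasurable (fun y => ENNReal.ofReal (|φ y| ^ r.toReal)) volume := by
    have := (hφm.aemeasurable.norm.pow_const r.toReal).ennreal_ofReal
    simpa [Real.norm_eq_abs] using this
  set h := hgm.mk _ with hh
  have hm : Measurable h := hgm.measurable_mk
  have hae : (fun y => ENNReal.ofReal (|φ y| ^ r.toReal)) =ᵐ[volume] h := hgm.ae_eq_mk
  have hloc : ∀ z : EuclideanSpace ℝ (Fin n), ∀ E : Set (EuclideanSpace ℝ (Fin n)),
      MeasurableSet E → E ⊆ Metric.ball z (T ^ ((1 : ℝ) / 2)) → ∀ s : ℝ, 0 < s →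
      volume E ≤ ENNReal.ofReal s → ∫⁻ x in E, h x ≤ ENNReal.ofReal (logFac s ^ (-α) * Q) := by
    intro z E hE hEB s hs hEs
    have := zyg_local' n hr hr' hα φ z E hE hEB hs hEs
    have hLs : 0 < logFac s := by linarith [lf_one_le hs]
    rw [← hNdef, hNQ, ← ENNReal.ofReal_mul (by positivity)] at this
    refine le_trans (le_of_eq ?_) this
    exact lintegral_congr_ae (ae_restrict_of_ae hae.symm)
  refine ⟨fun x => ∫⁻ y, ENNReal.ofReal (heatKernel n (x - y) t) * h y, ?_, ?_, ?_, ?_⟩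
  · apply Measurable.lintegral_prod_right'
      (f := fun p : EuclideanSpace ℝ (Fin n) × EuclideanSpace ℝ (Fin n) =>
        ENNReal.ofReal (heatKernel n (p.1 - p.2) t) * h p.2)
    exact ((hk_meas n t).comp (measurable_fst.sub measurable_snd)).mul (hm.comp measurable_snd)
  · intro x
    refine (hk_jensen n ht hr1 φ hφm x).trans (le_of_eq ?_)
    apply lintegral_congr_ae
    filter_upwards [hae] with y hy
    rw [hy]
  · intro x
    have hρ : 0 < t ^ ((1:ℝ) / 2) := by positivity
    have hV : ∀ z : EuclideanSpace ℝ (Fin n), volume (Metric.ball z (t ^ ((1:ℝ) / 2))) =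
        ENNReal.ofReal (v * t ^ ((n:ℝ) / 2)) := by
      intro z
      rw [Measure.addHaar_ball_of_pos _ _ hρ, finrank_euclideanSpace_fin,
        ← ENNReal.ofReal_toReal hvtop, ← ENNReal.ofReal_mul (by positivity), mul_comm,
        ← Real.rpow_natCast, ← Real.rpow_mul ht.le]
      congr 3
      ring
    have hw0 : 0 < v * t ^ ((n:ℝ) / 2) := by positivity
    have hLw : 0 < logFac (v * t ^ ((n:ℝ) / 2)) := by linarith [lf_one_le hw0]
    have hA : ∀ z, ∫⁻ y in Metric.ball z (t ^ ((1:ℝ) / 2)), h y ≤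
        ENNReal.ofReal (K ^ α * logFac t ^ (-α) * Q) := by
      intro z
      refine (hloc z _ measurableSet_ball (Metric.ball_subset_ball (by gcongr)) _ hw0
        (hV z).le).trans ?_
      apply ENNReal.ofReal_le_ofReal
      gcongr
      rw [Real.rpow_neg hLw.le, Real.rpow_neg hL0.le, ← div_eq_mul_inv, le_div_iff₀ (by positivity),
        inv_mul_le_iff₀ (by positivity), mul_comm, ← Real.mul_rpow hK.le hLw.le]
      exact Real.rpow_le_rpow hL0.le (hKL t ht) hα
    have := hk_sup n ht h hm _ _ hA hV x
    rw [← hc, ← ENNReal.ofReal_mul hc0.le, mul_comm, ← ENNReal.le_div_iff_mul_le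
      (Or.inl (by simpa using hw0)) (Or.inl ENNReal.ofReal_ne_top),
      ← ENNReal.ofReal_div_of_pos hw0] at this
    refine this.trans (le_of_eq ?_)
    congr 1
    rw [Real.rpow_neg ht.le]
    field_simp
  · intro z E hE hEB s hs hEs
    apply hk_set n ht h hm _ E hE
    intro y
    apply hloc (z - y) _ (hE.preimage (measurable_add_const y)) _ s hs
    · rw [measure_preimage_add_right]; exact hEs
    · intro w hw
      have := hEB hw
      rw [Metric.mem_ball, dist_eq_norm] at this ⊢
      rwa [show w - (z - y) = w + y - z by abel]

lemma case_top (n : ℕ) (φ : EuclideanSpace ℝ (Fin n) → ℝ) {ρ α : ℝ} (hρ : 0 < ρ)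
    (hN : zygNormULE n ⊤ α ρ φ < ⊤)
    {t : ℝ} (ht : 0 < t) (x : EuclideanSpace ℝ (Fin n)) :
    ‖heatSg n t φ x‖ₑ ≤ zygNormULE n ⊤ α ρ φ := by
  set N := zygNormULE n ⊤ α ρ φ with hNdef
  have hb : ∀ z : EuclideanSpace ℝ (Fin n), ∀ᵐ y, y ∈ Metric.ball z ρ → ‖φ y‖ₑ ≤ N := by
    intro z
    have h1 : eLpNorm ((Metric.ball z ρ).indicator φ) ⊤ volume ≤ N := by
      rw [hNdef]; unfold zygNormULE
      refine le_trans ?_ (le_iSup _ z)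
      simp [zygNormE]
    rw [eLpNorm_exponent_top] at h1
    filter_upwards [ae_le_eLpNormEssSup (f := (Metric.ball z ρ).indicator φ) (μ := volume)]
      with y hy hyz
    rw [Set.indicator_of_mem hyz] at hy
    exact hy.trans h1
  have hall : ∀ᵐ y, ‖φ y‖ₑ ≤ N := by
    obtain ⟨D, hDc, hDd⟩ := TopologicalSpace.exists_countable_dense (EuclideanSpace ℝ (Fin n))
    have := (ae_ball_iff hDc).mpr (fun z _ => hb z)
    filter_upwards [this] with y hy
    obtain ⟨z, hz, hd⟩ := hDd.exists_dist_lt y hρ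
    exact hy z hz hd
  unfold heatSg
  refine (enorm_integral_le_lintegral_enorm _).trans ?_
  calc ∫⁻ y, ‖heatKernel n (x - y) t * φ y‖ₑ
      ≤ ∫⁻ y, ENNReal.ofReal (heatKernel n (x - y) t) * N := by
        apply lintegral_mono_ae
        filter_upwards [hall] with y hy
        rw [enorm_mul, Real.enorm_of_nonneg (hk_nonneg n ht _)]
        gcongr
    _ = N := by
        have hh : Measurable fun y => ENNReal.ofReal (heatKernel n (x - y) t) :=
          (hk_meas n t).comp (measurable_const.sub measurable_id)
        rw [lintegral_mul_const _ hh,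
          hk_lint_sub n ht, one_mul]

lemma zygUL_top_le (n : ℕ) (β ρ : ℝ) (f : EuclideanSpace ℝ (Fin n) → ℝ) (R : ℝ≥0∞)
    (h : ∀ x, ‖f x‖ₑ ≤ R) : zygNormULE n ⊤ β ρ f ≤ R := by
  unfold zygNormULE zygNormE
  refine iSup_le fun z => ?_
  rw [if_pos rfl, eLpNorm_exponent_top]
  refine eLpNormEssSup_le_of_ae_enorm_bound (Filter.Eventually.of_forall fun x => ?_)
  exact (enorm_indicator_le_enorm_self _ _).trans (h x)

theorem stmt4 (n : ℕ) (hn : 1 ≤ n) (r q : ℝ≥0∞) (α β : ℝ)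
    (hr : 1 ≤ r) (hrq : r ≤ q) (hα : 0 ≤ α) (hβ : 0 ≤ β) (hcrit : r = q → α ≤ β) :
    ∃ C > (0 : ℝ), ∀ T : ℝ, 0 < T →
      ∀ φ : EuclideanSpace ℝ (Fin n) → ℝ, LocallyIntegrable φ volume →
        zygNormULE n r α (T ^ ((1 : ℝ) / 2)) φ < ⊤ →
        ∀ t : ℝ, 0 < t → t ≤ T →
          zygNormULE n q β (T ^ ((1 : ℝ) / 2)) (heatSg n t φ) ≤
            ENNReal.ofReal (C * t ^ (-((n : ℝ) / 2) * (r⁻¹.toReal - q⁻¹.toReal)) *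
                logFac t ^ (-α * r⁻¹.toReal + β * q⁻¹.toReal)) *
              zygNormULE n r α (T ^ ((1 : ℝ) / 2)) φ := by
  by_cases hr' : r = ⊤
  · have hq : q = ⊤ := top_le_iff.mp (hr' ▸ hrq)
    subst hr' hq
    refine ⟨1, one_pos, fun T hT φ hφ hN t ht htT => ?_⟩
    simp only [ENNReal.inv_top, ENNReal.toReal_zero, sub_self, mul_zero, add_zero, Real.rpow_zero,
      mul_one, ENNReal.ofReal_one, one_mul]
    exact zygUL_top_le n β _ _ _ (fun x => case_top n φ (by positivity) hN ht x)
  have ha : 0 < (n:ℝ) / 2 := by positivity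
  have hr1 : 1 ≤ r.toReal := by
    have := ENNReal.toReal_mono hr' hr
    simpa using this
  have hr0 : 0 < r.toReal := by linarith
  obtain ⟨C1, hC1, hF⟩ := main_F n hn hr hr' hα
  by_cases hq' : q = ⊤
  · subst hq'
    refine ⟨C1 ^ (r.toReal)⁻¹, by positivity, fun T hT φ hφ hN t ht htT => ?_⟩
    obtain ⟨F, hFm, hF0, hF1, hF2⟩ := hF T hT φ hφ hN t ht htT
    have hL0 : 0 < logFac t := by linarith [lf_one_le ht]
    set N := zygNormULE n r α (T ^ ((1 : ℝ) / 2)) φ with hNdef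
    apply zygUL_top_le
    intro x
    have h1 := (hF0 x).trans (hF1 x)
    rw [← ENNReal.le_rpow_inv_iff hr0] at h1
    refine h1.trans (le_of_eq ?_)
    have hN0 : 0 ≤ N.toReal := ENNReal.toReal_nonneg
    rw [ENNReal.ofReal_rpow_of_nonneg (by positivity) (by positivity),
      Real.mul_rpow (by positivity) (by positivity), Real.mul_rpow (by positivity) (by positivity),
      Real.mul_rpow (by positivity) (by positivity), ← Real.rpow_mul ht.le, ← Real.rpow_mul hL0.le,
      ← Real.rpow_mul hN0, mul_inv_cancel₀ hr0.ne', Real.rpow_one,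
      ENNReal.ofReal_mul (by positivity), ENNReal.ofReal_toReal hN.ne]
    simp [ENNReal.toReal_inv]
  have hqr : r.toReal ≤ q.toReal := ENNReal.toReal_mono hq' hrq
  have hq0 : 0 < q.toReal := by linarith
  have hp : 1 ≤ q.toReal / r.toReal := by rwa [one_le_div hr0]
  obtain ⟨C, hC, hcore⟩ := core (volume : Measure (EuclideanSpace ℝ (Fin n))) ha hα hβ hp
    (fun h => hcrit (by
      rw [div_eq_one_iff_eq hr0.ne'] at h
      exact ((ENNReal.toReal_eq_toReal_iff' hq' hr').mp h).symm)) hC1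
  refine ⟨C ^ (q.toReal)⁻¹, by positivity, fun T hT φ hφ hN t ht htT => ?_⟩
  obtain ⟨F, hFm, hF0, hF1, hF2⟩ := hF T hT φ hφ hN t ht htT
  have hL0 : 0 < logFac t := by linarith [lf_one_le ht]
  set N := zygNormULE n r α (T ^ ((1 : ℝ) / 2)) φ with hNdef
  have hN0 : 0 ≤ N.toReal := ENNReal.toReal_nonneg
  rw [ENNReal.toReal_inv, ENNReal.toReal_inv]
  set a : ℝ := (n:ℝ) / 2 with ha_def
  set rr := r.toReal with hrr
  set qq := q.toReal with hqq
  have hR : ENNReal.ofReal (C ^ qq⁻¹ * t ^ (-a * (rr⁻¹ - qq⁻¹)) *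
      logFac t ^ (-α * rr⁻¹ + β * qq⁻¹)) * N = ENNReal.ofReal ((C ^ qq⁻¹ * t ^ (-a * (rr⁻¹ - qq⁻¹)) *
      logFac t ^ (-α * rr⁻¹ + β * qq⁻¹)) * N.toReal) := by
    rw [ENNReal.ofReal_mul (p := C ^ qq⁻¹ * t ^ (-a * (rr⁻¹ - qq⁻¹)) *
      logFac t ^ (-α * rr⁻¹ + β * qq⁻¹)) (by positivity), ENNReal.ofReal_toReal hN.ne]
  have hRq : ((C ^ qq⁻¹ * t ^ (-a * (rr⁻¹ - qq⁻¹)) *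
      logFac t ^ (-α * rr⁻¹ + β * qq⁻¹)) * N.toReal) ^ qq = C * (t ^ (-a * (qq / rr - 1)) *
        logFac t ^ (-α * (qq / rr) + β) * (N.toReal ^ rr) ^ (qq / rr)) := by
    rw [Real.mul_rpow (by positivity) (by positivity), Real.mul_rpow (by positivity) (by positivity),
      Real.mul_rpow (by positivity) (by positivity), ← Real.rpow_mul ht.le, ← Real.rpow_mul hL0.le,
      ← Real.rpow_mul hN0, ← Real.rpow_mul hC.le, inv_mul_cancel₀ hq0.ne', Real.rpow_one,
      mul_div_cancel₀ _ hr0.ne']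
    have e1 : -a * (rr⁻¹ - qq⁻¹) * qq = -a * (qq / rr - 1) := by field_simp
    have e2 : (-α * rr⁻¹ + β * qq⁻¹) * qq = -α * (qq / rr) + β := by field_simp
    rw [e1, e2]; ring
  rw [hR]
  unfold zygNormULE zygNormE
  refine iSup_le fun z => ?_
  rw [if_neg hq']
  refine iSup_le fun s => ?_
  obtain ⟨s, hs⟩ := s
  have hs : 0 < s := hs
  have hLs : 0 < logFac s := by linarith [lf_one_le hs]
  rw [← hqq, one_div qq, ENNReal.rpow_inv_le_iff hq0, ENNReal.ofReal_rpow_of_nonneg (by positivity) hq0.le,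
    hRq, ENNReal.ofReal_rpow_of_pos hLs]
  have key : (⨆ E : {E : Set (EuclideanSpace ℝ (Fin n)) //
            MeasurableSet E ∧ volume E = ENNReal.ofReal s},
          ∫⁻ x in E.1, ENNReal.ofReal
            (|(Metric.ball z (T ^ ((1:ℝ) / 2))).indicator (heatSg n t φ) x| ^ qq)) ≤
      ENNReal.ofReal (C * (t ^ (-a * (qq / rr - 1)) *
        logFac t ^ (-α * (qq / rr) + β) * (N.toReal ^ rr) ^ (qq / rr) * logFac s ^ (-β))) := by
    refine iSup_le fun E => ?_
    obtain ⟨E, hEm, hEs⟩ := E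
    refine le_trans ?_ (hcore t ht (N.toReal ^ rr) (by positivity) F hFm
      (Metric.ball z (T ^ ((1:ℝ) / 2))) measurableSet_ball hF1 (hF2 z) s hs E hEm hEs)
    rw [Set.inter_comm, ← setLIntegral_indicator measurableSet_ball]
    apply lintegral_mono
    intro x
    dsimp only
    by_cases hx : x ∈ Metric.ball z (T ^ ((1:ℝ) / 2))
    · rw [Set.indicator_of_mem hx, Set.indicator_of_mem hx,
        ← ENNReal.ofReal_rpow_of_nonneg (abs_nonneg _) hq0.le, ← Real.enorm_eq_ofReal_abs]
      calc ‖heatSg n t φ x‖ₑ ^ qq = (‖heatSg n t φ x‖ₑ ^ rr) ^ (qq / rr) := by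
            rw [← ENNReal.rpow_mul, mul_div_cancel₀ _ hr0.ne']
        _ ≤ _ := ENNReal.rpow_le_rpow (hF0 x) (by positivity)
    · rw [Set.indicator_of_notMem hx, Set.indicator_of_notMem hx]
      simp [Real.zero_rpow hq0.ne']
  refine (mul_le_mul_right key _).trans (le_of_eq ?_)
  rw [← ENNReal.ofReal_mul (by positivity)]
  congr 1
  rw [Real.rpow_neg hLs.le]
  field_simp
end
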